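/- arXiv:2301.11056 — 2 statements merged into one kernel-verified Lean document; each statement's English description precedes it below -/
import Mathlib

section
/- There are infinitely many abc triples (a,b,c) satisfying exp(6.563·√(log c)/log log c)·rad(abc) ≤ c. Precisely: for every real N there exist positive integers a, b, c with gcd(a,b) = 1, a + b = c, c > N, and exp(6.563·√(log c)/log log c)·rad(abc) ≤ c. -/
/-- The radical of a positive integer: the product of its distinct prime factors. -/
def rad (n : ℕ) : ℕ := n.primeFactors.prod id

/-!
Let `v t = -log (σ t * σ (-t))` be minus the log-density of the logistic distribution, `σ` being the
sigmoid. For large `k` let `p i` run over the `n` odd primes up to `k`, put `L = log k` and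
`η = exp 1 / (n * L)`, and consider exponent vectors `x` with `∑ i, v (η * x i)` in a window of
width `n * ε` at height about `n * μ`. As `∑ z : ℤ, η * exp (-v (η * z))` is close to `1`, some
window contains almost `(exp μ / η) ^ n` vectors, and by the pigeonhole principle many of them give
the same residue of `∏ i, p i ^ x i` modulo a power `2 ^ m` of about that size, and nearly the same
value of `∑ i, x i * log (p i)`.

Because `∫ t, (1_{a < t} - σ t) ^ 2 = v a - 1`, every finite family satisfies
`∑ i ∈ s, ∑ j ∈ s, |y i - y j| ≤ 2 * #s * ∑ i ∈ s, (v (y i) - 1)`, so two of these vectors satisfy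
`∑ i, η * log (p i) / L * |x i - x' i| ≤ 2 * n * (μ - 1)`, up to a factor close to `1`. The
numerator `A` and denominator `B` of `∏ i, p i ^ (x i - x' i)` are then congruent modulo `2 ^ m`,
and `log (max A B)` is at most about `(n * L) ^ 2 / exp 1 * (μ - 1)`. In the triple
`(|A - B|, min A B, max A B)` the power `2 ^ m` beats the contribution of the primorial of `k` to
the radical by `exp (n * μ)`, provided that `π k * log k - θ k` is at least about `k / log k`, which
happens for arbitrarily large `k` because `∑ p ≤ k, 1 / p` grows like `log L`. Finally
`μ - 1 ≤ μ ^ 2 / 4` produces the constant `4 * √(exp 1)`.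
-/

open Filter Finset MeasureTheory
open Real (exp log sigmoid)
open scoped Chebyshev Nat.Prime Topology

section Primes

lemma log_add_one_le_prod_one_sub_inv_inv (k : ℕ) :
    log (k + 1) ≤ ∏ p ∈ k.primesLE, (1 - (p : ℝ)⁻¹)⁻¹ := by
  let inverse : ℕ →* ℝ :=
    { toFun n := (n : ℝ)⁻¹
      map_one' := by simp
      map_mul' a b := by simp [mul_comm] }
  have norm_lt_one {p : ℕ} (hp : p.Prime) : ‖inverse p‖ < 1 := by
    change ‖(p : ℝ)⁻¹‖ < 1
    rw [Real.norm_of_nonneg (inv_nonneg.2 p.cast_nonneg)]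
    exact inv_lt_one_of_one_lt₀ (mod_cast hp.one_lt)
  have euler := (EulerProduct.summable_and_hasSum_smoothNumbers_prod_primesBelow_geometric
    norm_lt_one (k + 1)).2
  let smooth : Icc 1 k ↪ (k + 1).smoothNumbers :=
    { toFun i := ⟨i, Nat.mem_smoothNumbers_of_lt (mem_Icc.1 i.2).1
        (Nat.lt_succ_of_le (mem_Icc.1 i.2).2)⟩
      inj' i j hij := Subtype.ext (congrArg Subtype.val hij :) }
  calc log (k + 1) ≤ ∑ i ∈ Icc 1 k, (i : ℝ)⁻¹ := by
        simpa only [harmonic_eq_sum_Icc, Rat.cast_sum, Rat.cast_inv, Rat.cast_natCast,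
          Nat.cast_add_one] using log_add_one_le_harmonic k
    _ = ∑ n ∈ univ.map smooth, inverse n := by
        rw [← sum_attach, sum_map]
        rfl
    _ ≤ ∏ p ∈ k.primesLE, (1 - (p : ℝ)⁻¹)⁻¹ :=
        sum_le_hasSum _ (fun n _ ↦ inv_nonneg.2 (Nat.cast_nonneg (n : ℕ))) euler

lemma log_one_sub_inv_le {t : ℝ} (ht : t ≤ 1 / 2) :
    log (1 - t)⁻¹ ≤ t + 2 * t ^ 2 := by
  have pos : 0 < 1 - t := by linarith
  have bound : (1 - t)⁻¹ ≤ 1 + t + 2 * t ^ 2 := by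
    rw [inv_le_iff_one_le_mul₀ pos]
    nlinarith [mul_nonneg (sq_nonneg t) (by linarith : 0 ≤ 1 - 2 * t)]
  linarith [Real.log_le_sub_one_of_pos (inv_pos.2 pos)]

lemma exists_log_log_le_sum_primesLE_inv_add :
    ∃ C : ℝ, ∀ k : ℕ, 1 ≤ k → log (log (k + 1)) ≤ ∑ p ∈ k.primesLE, (p : ℝ)⁻¹ + C := by
  have summable : Summable fun n : ℕ ↦ ((n : ℝ) ^ 2)⁻¹ :=
    Real.summable_nat_pow_inv.2 one_lt_two
  refine ⟨2 * ∑' n : ℕ, ((n : ℝ) ^ 2)⁻¹, fun k hk ↦ ?_⟩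
  have inv_le {p : ℕ} (hp : p ∈ k.primesLE) : (p : ℝ)⁻¹ ≤ 1 / 2 := by
    rw [one_div]
    exact inv_anti₀ two_pos (mod_cast Nat.two_le_of_mem_primesLE hp)
  have factor_ne_zero {p : ℕ} (hp : p ∈ k.primesLE) : (1 - (p : ℝ)⁻¹)⁻¹ ≠ 0 :=
    inv_ne_zero (by linarith [inv_le hp])
  have log_pos : 0 < log (k + 1 : ℝ) := Real.log_pos (by norm_cast; omega)
  calc log (log (k + 1)) ≤ log (∏ p ∈ k.primesLE, (1 - (p : ℝ)⁻¹)⁻¹) :=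
        Real.log_le_log log_pos (log_add_one_le_prod_one_sub_inv_inv k)
    _ = ∑ p ∈ k.primesLE, log (1 - (p : ℝ)⁻¹)⁻¹ := Real.log_prod fun _ ↦ factor_ne_zero
    _ ≤ ∑ p ∈ k.primesLE, ((p : ℝ)⁻¹ + 2 * ((p : ℝ) ^ 2)⁻¹) := by
        gcongr with p hp
        simpa only [inv_pow] using log_one_sub_inv_le (inv_le hp)
    _ = ∑ p ∈ k.primesLE, (p : ℝ)⁻¹ + 2 * ∑ p ∈ k.primesLE, ((p : ℝ) ^ 2)⁻¹ := by
        rw [sum_add_distrib, mul_sum]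
    _ ≤ _ := by
        gcongr
        exact summable.sum_le_tsum _ fun n _ ↦ by positivity

/-- The integral `∫ t in 1..k, (π t * log t - θ t) / t ^ 2` in closed form. It differs from the sum
of the reciprocals of the primes up to `k` by a bounded amount, and its increments are governed by
`π k * log k - θ k`. -/
noncomputable def smoothedPrimeReciprocals (k : ℕ) : ℝ :=
  ∑ p ∈ k.primesLE, (p : ℝ)⁻¹ - (π k * (1 + log k) - θ k) / k

lemma smoothedPrimeReciprocals_succ_le {k : ℕ} (hk : k ≠ 0) :
    smoothedPrimeReciprocals (k + 1) ≤ smoothedPrimeReciprocals k +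
      (π (k + 1) * log (k + 1) - θ (k + 1)) / (k * (k + 1)) := by
  have hk₀ : (0 : ℝ) < k := by positivity
  have log_step : 0 ≤ log (k + 1 : ℝ) - log k - 1 / (k + 1) := by
    have := Real.one_sub_inv_le_log_of_pos (show (0 : ℝ) < (k + 1) / k by positivity)
    rw [Real.log_div (by positivity) hk₀.ne', inv_div, one_sub_div (by positivity),
      add_sub_cancel_left] at this
    linarith
  have defect : 0 ≤ (π k : ℝ) / k * (log (k + 1 : ℝ) - log k - 1 / (k + 1)) := by positivity
  have theta_succ : θ ((k : ℝ) + 1) = ∑ p ∈ (k + 1).primesLE, log p :=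
    mod_cast Chebyshev.theta_eq_sum_primesLE_log (k + 1)
  simp only [smoothedPrimeReciprocals, Nat.cast_add_one, theta_succ,
    Chebyshev.theta_eq_sum_primesLE_log k, ← Nat.primesLE_card_eq_primeCounting]
    at defect ⊢
  rw [← sub_nonneg]
  convert defect using 1
  rw [Nat.primesLE_succ]
  split_ifs
  · simp only [sum_insert (Nat.notMem_primesLE k), card_insert_of_notMem (Nat.notMem_primesLE k),
      Nat.cast_add_one]
    field_simp
    ring
  · field_simp
    ring

lemma inv_mul_log_le_log_log_sub {x : ℝ} (hx : 1 < x) :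
    ((x + 1) * log (x + 1))⁻¹ ≤ log (log (x + 1)) - log (log x) := by
  have log_pos : 0 < log x := Real.log_pos hx
  have log_pos' : 0 < log (x + 1) := Real.log_pos (by linarith)
  have log_step : (x + 1)⁻¹ ≤ log (x + 1) - log x := by
    have := Real.one_sub_inv_le_log_of_pos (show 0 < (x + 1) / x by positivity)
    rw [Real.log_div (by positivity) (by positivity), inv_div, one_sub_div (by positivity),
      add_sub_cancel_left, one_div] at this
    exact this
  calc ((x + 1) * log (x + 1))⁻¹ = (x + 1)⁻¹ / log (x + 1) := by rw [mul_inv, div_eq_mul_inv]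
    _ ≤ (log (x + 1) - log x) / log (x + 1) := by gcongr
    _ = 1 - (log (x + 1) / log x)⁻¹ := by rw [inv_div, one_sub_div log_pos'.ne']
    _ ≤ log (log (x + 1) / log x) := Real.one_sub_inv_le_log_of_pos (by positivity)
    _ = _ := Real.log_div log_pos'.ne' log_pos.ne'

lemma exists_log_log_sub_le_smoothedPrimeReciprocals :
    ∃ C : ℝ, ∀ k : ℕ, 2 ≤ k →
      log (log k) - (π k * log k - θ k) / k - C ≤ smoothedPrimeReciprocals k := by
  obtain ⟨C, hC⟩ := exists_log_log_le_sum_primesLE_inv_add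
  refine ⟨C + 2, fun k hk ↦ ?_⟩
  have two_le : (2 : ℝ) ≤ k := mod_cast hk
  have log_log_le : log (log (k : ℝ)) ≤ log (log (k + 1)) :=
    Real.log_le_log (Real.log_pos (by linarith)) (Real.log_le_log (by linarith) (by linarith))
  have pi_div_le : (π k : ℝ) / k ≤ 2 := by
    rw [div_le_iff₀ (by linarith)]
    have : (π k : ℝ) ≤ k + 1 := mod_cast Nat.count_le (n := k + 1) Nat.Prime
    linarith
  have split : (π k * (1 + log k) - θ k) / k = π k / k + (π k * log k - θ k) / k := by ring
  rw [smoothedPrimeReciprocals, split]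
  linarith [hC k (by omega)]

lemma smoothedPrimeReciprocals_succ_le_add_log_log_sub {c c' : ℝ} {k : ℕ} (hk : 2 ≤ k)
    (hc' : 0 ≤ c') (hcc' : c * (k + 1) ≤ c' * k)
    (hsmall : π (k + 1) * log (k + 1) - θ (k + 1) ≤ c * (k + 1) / log (k + 1)) :
    smoothedPrimeReciprocals (k + 1) ≤
      smoothedPrimeReciprocals k + c' * (log (log (k + 1)) - log (log k)) := by
  have one_lt : (1 : ℝ) < k := mod_cast hk
  have log_pos : 0 < log (k + 1 : ℝ) := Real.log_pos (by linarith)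
  calc smoothedPrimeReciprocals (k + 1)
      ≤ smoothedPrimeReciprocals k + (π (k + 1) * log (k + 1) - θ (k + 1)) / (k * (k + 1)) :=
        smoothedPrimeReciprocals_succ_le (by omega)
    _ ≤ smoothedPrimeReciprocals k + c * (k + 1) / log (k + 1) / (k * (k + 1)) := by gcongr
    _ = smoothedPrimeReciprocals k + c * (k + 1) / k * ((k + 1) * log (k + 1 : ℝ))⁻¹ := by
        field_simp
    _ ≤ smoothedPrimeReciprocals k + c' * (log (log (k + 1)) - log (log k)) := by
        gcongr
        · rwa [div_le_iff₀ (by linarith)]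
        · exact inv_mul_log_le_log_log_sub one_lt

/- Otherwise `smoothedPrimeReciprocals` grows too slowly to keep up with `log (log k)`. -/
lemma frequently_le_primeCounting_mul_log_sub_theta {c : ℝ} (hc₀ : 0 ≤ c) (hc : c < 1) :
    ∃ᶠ k : ℕ in atTop, c * k / log k ≤ π k * log k - θ k := by
  intro eventually_lt
  obtain ⟨C, lower⟩ := exists_log_log_sub_le_smoothedPrimeReciprocals
  obtain ⟨c', hcc', hc'⟩ := exists_between hc
  have eventually_ratio : ∀ᶠ k : ℕ in atTop, c / (c' - c) ≤ k :=
    tendsto_natCast_atTop_atTop.eventually_ge_atTop _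
  obtain ⟨K, hK⟩ := eventually_atTop.1
    ((eventually_lt.and eventually_ratio).and (eventually_ge_atTop 3))
  have upper (k : ℕ) (hk : K ≤ k) : smoothedPrimeReciprocals k - c' * log (log k) ≤
      smoothedPrimeReciprocals K - c' * log (log K) := by
    induction k, hk using Nat.le_induction with
    | base => exact le_rfl
    | succ k hk ih =>
      obtain ⟨⟨-, ratio⟩, three_le⟩ := hK k hk
      have small := not_le.1 (hK (k + 1) (by omega)).1.1
      rw [div_le_iff₀ (sub_pos.2 hcc')] at ratio
      push_cast at small ⊢
      linarith [smoothedPrimeReciprocals_succ_le_add_log_log_sub (by omega : 2 ≤ k)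
        (hc₀.trans hcc'.le) (by linarith) small.le]
  have log_log_tendsto : Tendsto (fun k : ℕ ↦ log (log k)) atTop atTop :=
    Real.tendsto_log_atTop.comp (Real.tendsto_log_atTop.comp tendsto_natCast_atTop_atTop)
  obtain ⟨k, large, hk⟩ := ((log_log_tendsto.eventually_gt_atTop
    ((smoothedPrimeReciprocals K - c' * log (log K) + C + 1) / (1 - c'))).and
    (eventually_ge_atTop K)).exists
  obtain ⟨⟨small, -⟩, three_le⟩ := hK k hk
  have log_ge : 1 ≤ log (k : ℝ) := by
    have : (3 : ℝ) ≤ k := mod_cast three_le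
    rw [Real.le_log_iff_exp_le (by linarith)]
    linarith [Real.exp_one_lt_d9]
  have term_le : (π k * log k - θ k) / k ≤ 1 := by
    refine div_le_one_of_le₀ ((not_le.1 small).le.trans ?_) k.cast_nonneg
    exact (div_le_self (by positivity) log_ge).trans (mul_le_of_le_one_left k.cast_nonneg hc.le)
  rw [div_lt_iff₀ (by linarith)] at large
  linarith [upper k hk, lower k (by omega)]

lemma eventually_rpow_le_primeCounting_sub_one {ε : ℝ} (hε : 0 < ε) :
    ∀ᶠ k : ℕ in atTop, (k : ℝ) ^ (1 - ε) ≤ π k - 1 := by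
  have log_le_rpow {s : ℝ} (hs : 0 < s) : ∀ᶠ k : ℕ in atTop,
      ‖log (k : ℝ)‖ ≤ 1 / 8 * ‖(k : ℝ) ^ s‖ :=
    tendsto_natCast_atTop_atTop.eventually
      ((isLittleO_log_rpow_atTop hs).bound (by norm_num : (0 : ℝ) < 1 / 8))
  filter_upwards [log_le_rpow hε, log_le_rpow one_pos, eventually_ge_atTop 2]
    with k log_le log_le' two_le
  have hk : (2 : ℝ) ≤ k := mod_cast two_le
  have log_pos : 0 < log (k : ℝ) := Real.log_pos (by linarith)
  rw [Real.norm_of_nonneg log_pos.le, Real.norm_of_nonneg (by positivity)] at log_le log_le'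
  rw [Real.rpow_one] at log_le'
  have log_succ_le : log (k + 1 : ℝ) ≤ 2 * log k := by
    rw [← Real.log_rpow (by linarith), Real.rpow_two]
    exact Real.log_le_log (by linarith) (by nlinarith)
  have main_term : (k : ℝ) ^ (1 - ε) * log k ≤ k / 8 := by
    calc (k : ℝ) ^ (1 - ε) * log k ≤ (k : ℝ) ^ (1 - ε) * (1 / 8 * (k : ℝ) ^ ε) := by gcongr
      _ = 1 / 8 * ((k : ℝ) ^ (1 - ε) * (k : ℝ) ^ ε) := by ring
      _ = k / 8 := by
        rw [← Real.rpow_add (by linarith), sub_add_cancel, Real.rpow_one]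
        ring
  have := Chebyshev.pi_ge k
  rw [div_le_iff₀ log_pos] at this
  refine le_of_mul_le_mul_right ?_ log_pos
  nlinarith [Real.log_two_gt_d9]

end Primes

section Logistic

/-- Minus the logarithm of the density `sigmoid t * sigmoid (-t)` of the standard logistic
distribution. -/
noncomputable def logisticSurprisal (t : ℝ) : ℝ := -log (sigmoid t * sigmoid (-t))

lemma logisticSurprisal_eq_neg_add_neg (t : ℝ) :
    logisticSurprisal t = -log (sigmoid t) + -log (sigmoid (-t)) := by
  rw [logisticSurprisal, Real.log_mul t.sigmoid_pos.ne' (-t).sigmoid_pos.ne', neg_add]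

lemma exp_neg_logisticSurprisal (t : ℝ) :
    exp (-logisticSurprisal t) = sigmoid t * sigmoid (-t) := by
  rw [logisticSurprisal, neg_neg, Real.exp_log (mul_pos t.sigmoid_pos (-t).sigmoid_pos)]

lemma logisticSurprisal_neg (t : ℝ) : logisticSurprisal (-t) = logisticSurprisal t := by
  rw [logisticSurprisal, logisticSurprisal, neg_neg, mul_comm]

lemma logisticSurprisal_abs (t : ℝ) : logisticSurprisal |t| = logisticSurprisal t := by
  rcases abs_choice t with h | h <;> rw [h]
  exact logisticSurprisal_neg t

lemma logisticSurprisal_eq_log_cosh (t : ℝ) :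
    logisticSurprisal t = log (2 + 2 * Real.cosh t) := by
  rw [logisticSurprisal, Real.sigmoid_def, Real.sigmoid_def, ← mul_inv, Real.log_inv, neg_neg,
    neg_neg, Real.cosh_eq]
  congr 1
  rw [one_add_mul, mul_one_add, ← Real.exp_add, neg_add_cancel, Real.exp_zero]
  ring

lemma logisticSurprisal_le_of_abs_le {s t : ℝ} (h : |s| ≤ |t|) :
    logisticSurprisal s ≤ logisticSurprisal t := by
  simp only [logisticSurprisal_eq_log_cosh]
  have := Real.cosh_le_cosh.2 h
  gcongr

lemma log_four_le_logisticSurprisal (t : ℝ) : log 4 ≤ logisticSurprisal t := by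
  rw [logisticSurprisal_eq_log_cosh]
  gcongr
  linarith [Real.one_le_cosh t]

lemma abs_le_logisticSurprisal (t : ℝ) : |t| ≤ logisticSurprisal t := by
  rw [← logisticSurprisal_abs, logisticSurprisal_eq_log_cosh, Real.cosh_eq,
    Real.le_log_iff_exp_le (by positivity)]
  linarith [Real.exp_pos (-|t|)]

lemma logisticSurprisal_le_log_four_add_abs (t : ℝ) :
    logisticSurprisal t ≤ log 4 + |t| := by
  rw [← logisticSurprisal_abs, logisticSurprisal_eq_log_cosh, Real.cosh_eq,
    ← Real.log_exp |t|, ← Real.log_mul (by norm_num) (Real.exp_pos _).ne', Real.log_exp]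
  gcongr
  have := Real.one_le_exp (abs_nonneg t)
  have := Real.exp_le_one_iff.2 (neg_nonpos.2 (abs_nonneg t))
  linarith

lemma hasDerivAt_log_sigmoid_sub_sigmoid (t : ℝ) :
    HasDerivAt (fun t ↦ log (sigmoid t) - sigmoid t) ((1 - sigmoid t) ^ 2) t := by
  have := Real.hasDerivAt_sigmoid t
  refine ((this.log t.sigmoid_pos.ne').sub this).congr_deriv ?_
  rw [mul_div_cancel_left₀ _ t.sigmoid_pos.ne']
  ring

lemma tendsto_log_sigmoid_sub_sigmoid :
    Tendsto (fun t ↦ log (sigmoid t) - sigmoid t) atTop (𝓝 (-1)) := by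
  have := Real.tendsto_sigmoid_atTop
  simpa using (this.log one_ne_zero).sub this

lemma integrableOn_Ioi_one_sub_sigmoid_sq (a : ℝ) :
    IntegrableOn (fun t ↦ (1 - sigmoid t) ^ 2) (Set.Ioi a) :=
  integrableOn_Ioi_deriv_of_nonneg' (fun t _ ↦ hasDerivAt_log_sigmoid_sub_sigmoid t)
    (fun _ _ ↦ sq_nonneg _) tendsto_log_sigmoid_sub_sigmoid

lemma integral_Ioi_one_sub_sigmoid_sq (a : ℝ) :
    ∫ t in Set.Ioi a, (1 - sigmoid t) ^ 2 = -log (sigmoid a) - sigmoid (-a) := by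
  rw [integral_Ioi_of_hasDerivAt_of_nonneg' (fun t _ ↦ hasDerivAt_log_sigmoid_sub_sigmoid t)
    (fun _ _ ↦ sq_nonneg _) tendsto_log_sigmoid_sub_sigmoid, Real.sigmoid_neg]
  ring

lemma integrableOn_Iic_sigmoid_sq (a : ℝ) :
    IntegrableOn (fun t ↦ sigmoid t ^ 2) (Set.Iic a) := by
  rw [integrableOn_Iic_iff_integrableOn_Iio]
  simpa only [Real.sigmoid_neg, sub_sub_cancel, Set.neg_Ioi, neg_neg]
    using (integrableOn_Ioi_one_sub_sigmoid_sq (-a)).comp_neg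

lemma integral_Iic_sigmoid_sq (a : ℝ) :
    ∫ t in Set.Iic a, sigmoid t ^ 2 = -log (sigmoid (-a)) - sigmoid a := by
  have := integral_comp_neg_Ioi (-a) fun t ↦ sigmoid t ^ 2
  simpa only [Real.sigmoid_neg, neg_neg, integral_Ioi_one_sub_sigmoid_sq, sub_sub_cancel]
    using this.symm

/-- The indicator function of `(a, ∞)`. -/
noncomputable def step (a : ℝ) : ℝ → ℝ := (Set.Ioi a).indicator 1

lemma step_sub_sigmoid_sq_eqOn_Iic (a : ℝ) :
    Set.EqOn (fun t ↦ (step a t - sigmoid t) ^ 2) (fun t ↦ sigmoid t ^ 2) (Set.Iic a) := by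
  intro t ht
  simp [step, Set.mem_Iic.1 ht]

lemma step_sub_sigmoid_sq_eqOn_Ioi (a : ℝ) :
    Set.EqOn (fun t ↦ (step a t - sigmoid t) ^ 2) (fun t ↦ (1 - sigmoid t) ^ 2)
      (Set.Ioi a) := by
  intro t ht
  simp [step, Set.mem_Ioi.1 ht]

lemma integrable_step_sub_sigmoid_sq (a : ℝ) :
    Integrable fun t ↦ (step a t - sigmoid t) ^ 2 := by
  rw [← integrableOn_univ, ← Set.Iic_union_Ioi (a := a), integrableOn_union]
  exact ⟨(integrableOn_Iic_sigmoid_sq a).congr_fun (step_sub_sigmoid_sq_eqOn_Iic a).symm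
      measurableSet_Iic,
    (integrableOn_Ioi_one_sub_sigmoid_sq a).congr_fun (step_sub_sigmoid_sq_eqOn_Ioi a).symm
      measurableSet_Ioi⟩

/- The left-hand side is the continuous ranked probability score of the logistic distribution. -/
lemma integral_step_sub_sigmoid_sq (a : ℝ) :
    ∫ t, (step a t - sigmoid t) ^ 2 = logisticSurprisal a - 1 := by
  have integrable := integrable_step_sub_sigmoid_sq a
  rw [← intervalIntegral.integral_Iic_add_Ioi integrable.integrableOn integrable.integrableOn,
    setIntegral_congr_fun measurableSet_Iic (step_sub_sigmoid_sq_eqOn_Iic a),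
    setIntegral_congr_fun measurableSet_Ioi (step_sub_sigmoid_sq_eqOn_Ioi a),
    integral_Iic_sigmoid_sq, integral_Ioi_one_sub_sigmoid_sq, logisticSurprisal_eq_neg_add_neg,
    Real.sigmoid_neg]
  ring

lemma step_sub_step_sq (a b : ℝ) :
    (fun t ↦ (step a t - step b t) ^ 2) = (Set.uIoc a b).indicator 1 := by
  ext t
  by_cases ha : a < t <;> by_cases hb : b < t <;>
    simp [step, Set.indicator, Set.mem_uIoc, ha, hb, le_of_not_gt]

lemma integrable_step_sub_step_sq (a b : ℝ) : Integrable fun t ↦ (step a t - step b t) ^ 2 := by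
  rw [step_sub_step_sq]
  exact (integrable_indicator_iff measurableSet_uIoc).2 (integrableOn_const (by simp))

lemma integral_step_sub_step_sq (a b : ℝ) :
    ∫ t, (step a t - step b t) ^ 2 = |a - b| := by
  rw [step_sub_step_sq, integral_indicator_one measurableSet_uIoc, measureReal_def,
    Real.volume_uIoc, ENNReal.toReal_ofReal (abs_nonneg _), abs_sub_comm]

lemma sum_sum_sub_sq_le {ι : Type*} (s : Finset ι) (x : ι → ℝ) :
    ∑ i ∈ s, ∑ j ∈ s, (x i - x j) ^ 2 ≤ 2 * #s * ∑ i ∈ s, x i ^ 2 := by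
  have expand : ∑ i ∈ s, ∑ j ∈ s, (x i - x j) ^ 2 =
      2 * #s * ∑ i ∈ s, x i ^ 2 - 2 * (∑ i ∈ s, x i) ^ 2 := by
    simp only [sub_sq, sum_add_distrib, sum_sub_distrib, sum_const, nsmul_eq_mul, ← mul_sum,
      mul_assoc, ← sum_mul]
    ring
  rw [expand]
  linarith [sq_nonneg (∑ i ∈ s, x i)]

lemma sum_sum_abs_sub_le {ι : Type*} (s : Finset ι) (y : ι → ℝ) :
    ∑ i ∈ s, ∑ j ∈ s, |y i - y j| ≤ 2 * #s * ∑ i ∈ s, (logisticSurprisal (y i) - 1) := by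
  simp only [← integral_step_sub_step_sq, ← integral_step_sub_sigmoid_sq]
  have integrable_left (i : ι) : Integrable fun t ↦ ∑ j ∈ s, (step (y i) t - step (y j) t) ^ 2 :=
    integrable_finsetSum s fun j _ ↦ integrable_step_sub_step_sq _ _
  have integrable_right : Integrable fun t ↦ ∑ i ∈ s, (step (y i) t - sigmoid t) ^ 2 :=
    integrable_finsetSum s fun i _ ↦ integrable_step_sub_sigmoid_sq _
  calc ∑ i ∈ s, ∑ j ∈ s, ∫ t, (step (y i) t - step (y j) t) ^ 2
      = ∫ t, ∑ i ∈ s, ∑ j ∈ s, (step (y i) t - step (y j) t) ^ 2 := by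
        rw [integral_finsetSum s fun i _ ↦ integrable_left i]
        exact sum_congr rfl fun i _ ↦
          (integral_finsetSum s fun j _ ↦ integrable_step_sub_step_sq _ _).symm
    _ ≤ ∫ t, 2 * #s * ∑ i ∈ s, (step (y i) t - sigmoid t) ^ 2 :=
        integral_mono (integrable_finsetSum s fun i _ ↦ integrable_left i)
          (integrable_right.const_mul _)
          fun t ↦ by simpa only [sub_sub_sub_cancel_right]
            using sum_sum_sub_sq_le s fun i ↦ step (y i) t - sigmoid t
    _ = 2 * #s * ∑ i ∈ s, ∫ t, (step (y i) t - sigmoid t) ^ 2 := by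
        rw [integral_const_mul, integral_finsetSum s fun i _ ↦ integrable_step_sub_sigmoid_sq _]

end Logistic

section Counting

lemma sigmoid_sub_sigmoid_le {a b : ℝ} (ha : 0 ≤ a) (hab : a ≤ b) :
    sigmoid b - sigmoid a ≤ exp (-logisticSurprisal a) * (b - a) := by
  refine (convex_Icc a b).image_sub_le_mul_sub_of_deriv_le continuous_sigmoid.continuousOn
    (fun t _ ↦ (Real.hasDerivAt_sigmoid t).differentiableAt.differentiableWithinAt)
    (fun t ht ↦ ?_) a (Set.left_mem_Icc.2 hab) b (Set.right_mem_Icc.2 hab) hab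
  rw [interior_Icc] at ht
  rw [(Real.hasDerivAt_sigmoid t).deriv, ← Real.sigmoid_neg, ← exp_neg_logisticSurprisal]
  gcongr
  apply logisticSurprisal_le_of_abs_le
  rw [abs_of_nonneg ha, abs_of_nonneg (ha.trans ht.1.le)]
  exact ht.1.le

lemma two_mul_sigmoid_sub_le_sum_Icc {η : ℝ} (hη : 0 ≤ η) (M : ℕ) :
    2 * sigmoid (η * (M + 1)) - 1 - η ≤
      η * ∑ e ∈ Icc (-(M : ℤ)) M, exp (-logisticSurprisal (η * e)) := by
  induction M with
  | zero =>
    have := sigmoid_sub_sigmoid_le le_rfl hη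
    rw [exp_neg_logisticSurprisal, neg_zero, Real.sigmoid_zero] at this
    simp only [CharP.cast_eq_zero, neg_zero, Icc_self, sum_singleton, Int.cast_zero, mul_zero,
      exp_neg_logisticSurprisal, Real.sigmoid_zero, zero_add, mul_one]
    linarith
  | succ M ih =>
    have insert_ends : Icc (-((M + 1 : ℕ) : ℤ)) (M + 1 : ℕ) =
        insert (-((M + 1 : ℕ) : ℤ)) (insert ((M + 1 : ℕ) : ℤ) (Icc (-(M : ℤ)) M)) := by
      ext e
      simp only [mem_insert, mem_Icc]
      omega
    have := sigmoid_sub_sigmoid_le (a := η * (M + 1)) (b := η * (M + 1 + 1)) (by positivity)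
      (by linarith)
    rw [insert_ends, sum_insert (by simp; omega), sum_insert (by simp)]
    push_cast
    rw [mul_neg, logisticSurprisal_neg]
    linarith

lemma exists_le_mul_sum_exp_neg_logisticSurprisal {c : ℝ} (hc : c < 1) :
    ∃ B η₀ : ℝ, 0 < η₀ ∧ ∀ η, 0 < η → η ≤ η₀ → ∃ M : ℕ, η * M ≤ B ∧
      c ≤ η * ∑ e ∈ Icc (-(M : ℤ)) M, exp (-logisticSurprisal (η * e)) := by
  obtain ⟨B, hB⟩ := eventually_atTop.1 ((Real.tendsto_sigmoid_atTop.eventually_const_le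
    (show (c + 3) / 4 < 1 by linarith)).and (eventually_gt_atTop 0))
  have B_pos := (hB B le_rfl).2
  refine ⟨B, (1 - c) / 2, by linarith, fun η hη hη' ↦ ⟨⌊B / η⌋₊, ?_, ?_⟩⟩
  · have := Nat.floor_le (show 0 ≤ B / η by positivity)
    rwa [le_div_iff₀' hη] at this
  · have := Nat.lt_floor_add_one (B / η)
    rw [div_lt_iff₀' hη] at this
    linarith [(hB _ this.le).1, two_mul_sigmoid_sub_le_sum_Icc hη.le ⌊B / η⌋₊]

lemma exists_level_set {α : Type*} (s : Finset α) (V : α → ℝ) {a w : ℝ} (hw : 0 < w) (K : ℕ)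
    (ha : ∀ e ∈ s, a ≤ V e) (hK : ∀ e ∈ s, V e ≤ a + K * w) :
    ∃ t, a ≤ t ∧ ∃ T ⊆ s, (∀ e ∈ T, V e ≤ t + w) ∧
      ∑ e ∈ s, exp (-V e) ≤ (K + 1) * (#T * exp (-t)) := by
  let level (e : α) : ℕ := ⌊(V e - a) / w⌋₊
  have level_mem (e) (he : e ∈ s) : level e ∈ range (K + 1) := by
    rw [mem_range, Nat.lt_succ_iff]
    refine Nat.floor_le_of_le ?_
    rw [div_le_iff₀ hw]
    linarith [hK e he]
  obtain ⟨j, -, hj⟩ : ∃ j ∈ range (K + 1),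
      (∑ e ∈ s, exp (-V e)) / (K + 1) ≤ ∑ e ∈ s with level e = j, exp (-V e) := by
    refine exists_le_of_sum_le nonempty_range_add_one (le_of_eq ?_)
    rw [sum_fiberwise_of_maps_to level_mem, sum_const, card_range, nsmul_eq_mul,
      Nat.cast_add_one, mul_div_cancel₀ _ (by positivity)]
  refine ⟨a + j * w, by nlinarith [j.cast_nonneg (α := ℝ)], {e ∈ s | level e = j},
    filter_subset _ _, fun e he ↦ ?_, ?_⟩
  · have := Nat.lt_floor_add_one ((V e - a) / w)
    rw [show ⌊(V e - a) / w⌋₊ = j from (mem_filter.1 he).2, div_lt_iff₀ hw] at this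
    linarith
  · rw [div_le_iff₀' (by positivity)] at hj
    refine hj.trans (mul_le_mul_of_nonneg_left ?_ (by positivity))
    rw [← nsmul_eq_mul]
    refine sum_le_card_nsmul _ _ _ fun e he ↦ ?_
    obtain ⟨he, hej⟩ := mem_filter.1 he
    have := Nat.floor_le (div_nonneg (sub_nonneg.2 (ha e he)) hw.le)
    rw [show ⌊(V e - a) / w⌋₊ = j from hej, le_div_iff₀ hw] at this
    gcongr
    linarith

lemma sum_piFinset_exp_neg_sum {ι α : Type*} [Fintype ι] [DecidableEq ι] (s : Finset α)
    (f : α → ℝ) :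
    ∑ e ∈ Fintype.piFinset fun _ : ι ↦ s, exp (-∑ i, f (e i)) =
      (∑ x ∈ s, exp (-f x)) ^ Fintype.card ι := by
  simp only [← sum_neg_distrib, Real.exp_sum]
  rw [← card_univ, ← prod_const, prod_univ_sum]

lemma card_mul_log_four_le_sum_logisticSurprisal {ι : Type*} [Fintype ι] (y : ι → ℝ) :
    Fintype.card ι * log 4 ≤ ∑ i, logisticSurprisal (y i) := by
  rw [← nsmul_eq_mul, ← card_univ]
  exact card_nsmul_le_sum _ _ _ fun i _ ↦ log_four_le_logisticSurprisal _

lemma sum_logisticSurprisal_le {ι : Type*} [Fintype ι] {y : ι → ℝ} {B : ℝ}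
    (hy : ∀ i, |y i| ≤ B) :
    ∑ i, logisticSurprisal (y i) ≤ Fintype.card ι * (log 4 + B) := by
  rw [← nsmul_eq_mul, ← card_univ]
  exact sum_le_card_nsmul _ _ _ fun i _ ↦
    (logisticSurprisal_le_log_four_add_abs _).trans (by linarith [hy i])

lemma exists_finset_sum_logisticSurprisal_le {ε : ℝ} (hε : 0 < ε) :
    ∃ η₀ K : ℝ, 0 < η₀ ∧ 0 < K ∧ ∀ η, 0 < η → η ≤ η₀ → ∀ (ι : Type) [Fintype ι] [Nonempty ι],
      ∃ μ, log 4 ≤ μ ∧ ∃ E : Finset (ι → ℤ),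
        (∀ e ∈ E, ∑ i, logisticSurprisal (η * e i) ≤ Fintype.card ι * (μ + ε)) ∧
        (exp (μ - ε) / η) ^ Fintype.card ι ≤ K * #E := by
  classical
  obtain ⟨B, η₀, hη₀, riemann⟩ :=
    exists_le_mul_sum_exp_neg_logisticSurprisal (Real.exp_lt_one_iff.2 (neg_lt_zero.2 hε))
  refine ⟨η₀, ⌈B / ε⌉₊ + 1, hη₀, by positivity, fun η hη hηη₀ ι _ _ ↦ ?_⟩
  obtain ⟨M, hM, hS⟩ := riemann η hη hηη₀
  set n := Fintype.card ι
  set S := ∑ e ∈ Icc (-(M : ℤ)) M, exp (-logisticSurprisal (η * e))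
  have n_pos : (0 : ℝ) < n := Nat.cast_pos.2 Fintype.card_pos
  have le_on_box (e) (he : e ∈ Fintype.piFinset fun _ : ι ↦ Icc (-(M : ℤ)) M) :
      ∑ i, logisticSurprisal (η * e i) ≤ n * log 4 + ⌈B / ε⌉₊ * (n * ε) := by
    have abs_le (i : ι) : |η * e i| ≤ B := by
      have : |(e i : ℝ)| ≤ M := mod_cast abs_le.2 (mem_Icc.1 (Fintype.mem_piFinset.1 he i))
      rw [abs_mul, abs_of_pos hη]
      exact (mul_le_mul_of_nonneg_left this hη.le).trans hM
    have B_le : B ≤ ⌈B / ε⌉₊ * ε := (div_le_iff₀ hε).1 (Nat.le_ceil _)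
    exact (sum_logisticSurprisal_le abs_le).trans (by nlinarith)
  obtain ⟨t, ht, E, -, hE, large⟩ := exists_level_set _ _ (mul_pos n_pos hε) ⌈B / ε⌉₊
    (fun e _ ↦ card_mul_log_four_le_sum_logisticSurprisal _) le_on_box
  rw [sum_piFinset_exp_neg_sum (f := fun e : ℤ ↦ logisticSurprisal (η * e))] at large
  refine ⟨t / n, (le_div_iff₀' n_pos).2 ht, E, fun e he ↦ ?_, ?_⟩
  · rw [mul_add, mul_div_cancel₀ _ n_pos.ne']
    exact hE e he
  calc (exp (t / n - ε) / η) ^ n ≤ (exp (t / n) * S) ^ n := by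
        gcongr
        rw [sub_eq_add_neg, Real.exp_add, mul_div_assoc]
        gcongr
        rwa [div_le_iff₀' hη]
    _ = exp t * S ^ n := by rw [mul_pow, ← Real.exp_nat_mul, mul_div_cancel₀ _ n_pos.ne']
    _ ≤ exp t * ((⌈B / ε⌉₊ + 1) * (#E * exp (-t))) := by gcongr
    _ = (⌈B / ε⌉₊ + 1) * #E * (exp t * exp (-t)) := by ring
    _ = (⌈B / ε⌉₊ + 1) * #E := by rw [← Real.exp_add, add_neg_cancel, Real.exp_zero, mul_one]

end Counting

section Pigeonhole

lemma exists_ne_mul_card_mul_card_sub_one_le {α : Type*} {T : Finset α} (hT : 2 ≤ #T)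
    {f : α → α → ℝ} (hf : ∀ e e', 0 ≤ f e e') :
    ∃ e ∈ T, ∃ e' ∈ T, e ≠ e' ∧ f e e' * (#T * (#T - 1)) ≤ ∑ e ∈ T, ∑ e' ∈ T, f e e' := by
  classical
  have card_offDiag : (#T.offDiag : ℝ) = #T * (#T - 1) := by
    rw [offDiag_card, Nat.cast_sub (Nat.le_mul_self _)]
    push_cast
    ring
  have offDiag_nonempty : T.offDiag.Nonempty := by
    obtain ⟨e, he, e', he', hne⟩ := one_lt_card.1 hT
    exact ⟨(e, e'), mem_offDiag.2 ⟨he, he', hne⟩⟩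
  obtain ⟨⟨e, e'⟩, he, hmin⟩ := exists_min_image _ (fun q : α × α ↦ f q.1 q.2) offDiag_nonempty
  obtain ⟨he, he', hne⟩ := mem_offDiag.1 he
  refine ⟨e, he, e', he', hne, ?_⟩
  calc f e e' * (#T * (#T - 1)) = #T.offDiag • f e e' := by
        rw [nsmul_eq_mul, card_offDiag, mul_comm]
    _ ≤ ∑ q ∈ T.offDiag, f q.1 q.2 := card_nsmul_le_sum _ _ _ hmin
    _ ≤ ∑ q ∈ T ×ˢ T, f q.1 q.2 :=
        sum_le_sum_of_subset_of_nonneg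
          (fun q hq ↦ mem_product.2 ⟨(mem_offDiag.1 hq).1, (mem_offDiag.1 hq).2.1⟩)
          fun _ _ _ ↦ hf _ _
    _ = ∑ e ∈ T, ∑ e' ∈ T, f e e' := sum_product' _ _ _

lemma exists_subset_card_eq_and_abs_sub_mul_le {α G : Type*} [Fintype G] [Nonempty G] {E : Finset α}
    (g : α → G) {X : α → ℝ} {C : ℝ} (hC : 0 < C) (hX : ∀ e ∈ E, |X e| ≤ C) {J N : ℕ}
    (hE : Fintype.card G * (2 * J + 1) * N ≤ #E) :
    ∃ T ⊆ E, #T = N ∧ ∀ e ∈ T, ∀ e' ∈ T, g e = g e' ∧ |X e - X e'| * J ≤ C := by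
  classical
  let box (e : α) : G × ℤ := (g e, ⌊X e * J / C⌋)
  have box_mem (e) (he : e ∈ E) : box e ∈ univ ×ˢ Icc (-(J : ℤ)) J := by
    obtain ⟨lower, upper⟩ := abs_le.1 (hX e he)
    refine mem_product.2 ⟨mem_univ _, mem_Icc.2 ⟨Int.le_floor.2 ?_, Int.floor_le_iff.2 ?_⟩⟩
    · rw [le_div_iff₀ hC]
      push_cast
      nlinarith [J.cast_nonneg (α := ℝ)]
    · rw [div_lt_iff₀ hC]
      push_cast
      nlinarith [J.cast_nonneg (α := ℝ)]
  have card_boxes : #(univ ×ˢ Icc (-(J : ℤ)) J : Finset (G × ℤ)) * N ≤ #E := by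
    rwa [card_product, card_univ, Int.card_Icc,
      show (J + 1 - -(J : ℤ)).toNat = 2 * J + 1 by omega]
  obtain ⟨q, -, hq⟩ := exists_le_card_fiber_of_mul_le_card_of_maps_to box_mem
    (univ_nonempty.product ⟨0, by simp⟩) card_boxes
  obtain ⟨T, hTE, hT⟩ := exists_subset_card_eq hq
  refine ⟨T, hTE.trans (filter_subset _ _), hT, fun e he e' he' ↦ ?_⟩
  have same_box : box e = box e' :=
    (mem_filter.1 (hTE he)).2.trans (mem_filter.1 (hTE he')).2.symm
  refine ⟨congrArg Prod.fst same_box, ?_⟩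
  have := Int.abs_sub_lt_one_of_floor_eq_floor (congrArg Prod.snd same_box)
  rw [← sub_div, ← sub_mul, abs_div, abs_of_pos hC, div_lt_one hC, abs_mul, Nat.abs_cast] at this
  exact this.le

variable {ι : Type*} [Fintype ι]

lemma exists_ne_sum_abs_sub_mul_le {α : Type*} {T : Finset α} (hT : 2 ≤ #T) {y : α → ι → ℝ} {C : ℝ}
    (hC : ∀ e ∈ T, ∑ i, logisticSurprisal (y e i) ≤ C) :
    ∃ e ∈ T, ∃ e' ∈ T, e ≠ e' ∧
      (∑ i, |y e i - y e' i|) * (#T - 1) ≤ 2 * (C - Fintype.card ι) * #T := by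
  obtain ⟨e, he, e', he', hne, hmin⟩ := exists_ne_mul_card_mul_card_sub_one_le hT
    (f := fun e e' ↦ ∑ i, |y e i - y e' i|) fun _ _ ↦ by positivity
  refine ⟨e, he, e', he', hne, le_of_mul_le_mul_left ?_ (show (0 : ℝ) < #T by positivity)⟩
  calc #T * ((∑ i, |y e i - y e' i|) * (#T - 1))
      ≤ ∑ e ∈ T, ∑ e' ∈ T, ∑ i, |y e i - y e' i| := by linarith
    _ = ∑ i, ∑ e ∈ T, ∑ e' ∈ T, |y e i - y e' i| := by
        simp only [sum_comm (s := T) (t := univ (α := ι))]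
    _ ≤ ∑ i, 2 * #T * ∑ e ∈ T, (logisticSurprisal (y e i) - 1) :=
        sum_le_sum fun i _ ↦ sum_sum_abs_sub_le T fun e ↦ y e i
    _ = 2 * #T * ∑ e ∈ T, (∑ i, logisticSurprisal (y e i) - Fintype.card ι) := by
        rw [← mul_sum, sum_comm]
        simp [sum_sub_distrib]
    _ ≤ 2 * #T * (#T * (C - Fintype.card ι)) := by
        rw [← nsmul_eq_mul (#T)]
        gcongr
        exact sum_le_card_nsmul _ _ _ fun e he ↦ by linarith [hC e he]
    _ = #T * (2 * (C - Fintype.card ι) * #T) := by ring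

lemma abs_sum_le_sum_logisticSurprisal (y : ι → ℝ) : |∑ i, y i| ≤ ∑ i, logisticSurprisal (y i) :=
  (abs_sum_le_sum_abs _ _).trans (sum_le_sum fun _ _ ↦ abs_le_logisticSurprisal _)

lemma exists_ne_zero_prod_zpow_eq_one {G : Type*} [CommGroup G] [Fintype G] (u : ι → G)
    {w : ι → ℝ} {η C : ℝ} (hw₀ : ∀ i, 0 ≤ w i) (hw : ∀ i, w i ≤ η) (hC₀ : 0 < C)
    {E : Finset (ι → ℤ)} (hC : ∀ e ∈ E, ∑ i, logisticSurprisal (η * e i) ≤ C) {J : ℕ} (hJ : 0 < J)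
    (hE : Fintype.card G * (2 * J + 1) * (J + 1) ≤ #E) :
    ∃ d : ι → ℤ, d ≠ 0 ∧ ∏ i, u i ^ d i = 1 ∧
      (∑ i, |w i * d i|) * J ≤ 2 * (C - Fintype.card ι) * (J + 1) ∧
      |∑ i, w i * d i| * J ≤ C := by
  have hwC (e) (he : e ∈ E) : ∑ i, logisticSurprisal (w i * e i) ≤ C := by
    refine (sum_le_sum fun i _ ↦ logisticSurprisal_le_of_abs_le ?_).trans (hC e he)
    rw [abs_mul, abs_mul, abs_of_nonneg (hw₀ i)]
    exact mul_le_mul_of_nonneg_right ((hw i).trans (le_abs_self η)) (abs_nonneg _)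
  obtain ⟨T, hTE, hT, same⟩ := exists_subset_card_eq_and_abs_sub_mul_le
    (fun e ↦ ∏ i, u i ^ e i) hC₀
    (fun e he ↦ (abs_sum_le_sum_logisticSurprisal _).trans (hwC e he)) hE
  obtain ⟨e, he, e', he', hne, close⟩ := exists_ne_sum_abs_sub_mul_le (T := T) (by omega)
    (y := fun e i ↦ w i * e i) fun e he ↦ hwC e (hTE he)
  obtain ⟨same_prod, close_sum⟩ := same e he e' he'
  refine ⟨e - e', sub_ne_zero.2 hne, ?_, ?_, ?_⟩
  · simp only [Pi.sub_apply, zpow_sub, prod_mul_distrib, prod_inv_distrib, same_prod,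
      mul_inv_cancel]
  · simpa [hT, mul_sub] using close
  · simpa [mul_sub] using close_sum

end Pigeonhole

section Triples

/-- An abc triple: coprime positive integers `a` and `b` with sum `c`. -/
def IsABCTriple (a b c : ℕ) : Prop := 0 < a ∧ 0 < b ∧ 0 < c ∧ Nat.gcd a b = 1 ∧ a + b = c

lemma isABCTriple_sub {A B : ℕ} (hAB : A.Coprime B) (hB : 0 < B) (hlt : B < A) :
    IsABCTriple (A - B) B A :=
  ⟨Nat.sub_pos_of_lt hlt, hB, hB.trans hlt, (Nat.coprime_sub_self_left hlt.le).2 hAB,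
    Nat.sub_add_cancel hlt.le⟩

lemma rad_eq_radical (n : ℕ) : rad n = UniqueFactorizationMonoid.radical n :=
  Nat.radical_eq_prod_primeFactors.symm

lemma rad_pos (n : ℕ) : 0 < rad n := rad_eq_radical n ▸ Nat.radical_pos n

lemma rad_le {n : ℕ} (hn : n ≠ 0) : rad n ≤ n :=
  rad_eq_radical n ▸ Nat.radical_le_self_iff.2 hn

lemma rad_mul_le (a b : ℕ) : rad (a * b) ≤ rad a * rad b :=
  Nat.le_of_dvd (mul_pos (rad_pos a) (rad_pos b)) <| by
    simpa only [rad_eq_radical] using UniqueFactorizationMonoid.radical_mul_dvd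

lemma rad_pow_le {q : ℕ} (hq : q ≠ 0) (m : ℕ) : rad (q ^ m) ≤ q :=
  Nat.le_of_dvd (Nat.pos_of_ne_zero hq) <| rad_eq_radical (q ^ m) ▸
    UniqueFactorizationMonoid.radical_pow_dvd.trans UniqueFactorizationMonoid.radical_dvd_self

lemma rad_prod_pow_le {ι : Type*} [Fintype ι] {p : ι → ℕ} (hp : ∀ i, p i ≠ 0) (e : ι → ℕ) :
    rad (∏ i, p i ^ e i) ≤ ∏ i, p i :=
  (le_prod_of_submultiplicative rad (by simp [rad]) rad_mul_le _ _).trans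
    (prod_le_prod' fun i _ ↦ rad_pow_le (hp i) _)

lemma exists_isABCTriple_of_modEq {A B M : ℕ} (hA : 0 < A) (hB : 0 < B) (hne : A ≠ B)
    (hAB : A.Coprime B) (hmod : A ≡ B [MOD M]) :
    ∃ a b, IsABCTriple a b (max A B) ∧ M < max A B ∧
      rad (a * b * max A B) * M ≤ rad M * rad (A * B) * max A B := by
  wlog hlt : B < A generalizing A B
  · rw [max_comm, mul_comm A]
    exact this hB hA hne.symm hAB.symm hmod.symm (hne.lt_or_gt.resolve_right hlt)
  obtain ⟨t, ht⟩ := (Nat.modEq_iff_dvd' hlt.le).1 hmod.symm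
  have t_pos : 0 < t := Nat.pos_of_mul_pos_left (ht ▸ Nat.sub_pos_of_lt hlt)
  rw [max_eq_left hlt.le]
  refine ⟨A - B, B, isABCTriple_sub hAB hB hlt, ?_, ?_⟩
  · have := Nat.le_mul_of_pos_right M t_pos
    omega
  calc rad ((A - B) * B * A) * M = rad (M * t * (A * B)) * M := by rw [ht, mul_assoc, mul_comm B]
    _ ≤ rad M * rad t * rad (A * B) * M := by
        gcongr
        exact (rad_mul_le _ _).trans (Nat.mul_le_mul_right _ (rad_mul_le _ _))
    _ ≤ rad M * t * rad (A * B) * M := by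
        gcongr
        exact rad_le t_pos.ne'
    _ = rad M * rad (A * B) * (A - B) := by rw [ht]; ring
    _ ≤ rad M * rad (A * B) * A := Nat.mul_le_mul_left _ (Nat.sub_le _ _)

variable {ι : Type*} [Fintype ι] {p : ι → ℕ} {d : ι → ℤ}

/-- The numerator of `∏ i, p i ^ d i`, its denominator being `numProd p (-d)`. For distinct primes
`p i` this fraction is in lowest terms. -/
def numProd (p : ι → ℕ) (d : ι → ℤ) : ℕ := ∏ i, p i ^ (d i).toNat

lemma numProd_pos (hp : ∀ i, (p i).Prime) : 0 < numProd p d :=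
  prod_pos fun i _ ↦ pow_pos (hp i).pos _

lemma coprime_numProd_numProd_neg (hp : ∀ i, (p i).Prime) (hinj : Function.Injective p) :
    (numProd p d).Coprime (numProd p (-d)) := by
  refine Nat.Coprime.prod_left fun i _ ↦ Nat.Coprime.prod_right fun j _ ↦ ?_
  rcases eq_or_ne i j with rfl | hij
  · rcases le_total 0 (d i) with h | h
    · rw [Pi.neg_apply, Int.toNat_of_nonpos (neg_nonpos.2 h), pow_zero]
      exact Nat.coprime_one_right _
    · rw [Int.toNat_of_nonpos h, pow_zero]
      exact Nat.coprime_one_left _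
  · exact .pow _ _ ((Nat.coprime_primes (hp i) (hp j)).2 (hinj.ne hij))

lemma toNat_eq_zero_of_numProd_eq_one (hp : ∀ i, (p i).Prime) (h : numProd p d = 1) (i : ι) :
    (d i).toNat = 0 :=
  (Nat.pow_eq_one.1 (prod_eq_one_iff.1 h i (mem_univ i))).resolve_left (hp i).ne_one

lemma numProd_ne_numProd_neg (hp : ∀ i, (p i).Prime) (hinj : Function.Injective p) (hd : d ≠ 0) :
    numProd p d ≠ numProd p (-d) := by
  contrapose! hd
  have h₁ := coprime_numProd_numProd_neg (d := d) hp hinj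
  rw [← hd, Nat.coprime_self] at h₁
  ext i
  have := toNat_eq_zero_of_numProd_eq_one hp h₁ i
  have := toNat_eq_zero_of_numProd_eq_one hp (hd ▸ h₁) i
  simp only [Pi.neg_apply, Pi.zero_apply] at *
  omega

lemma numProd_modEq_numProd_neg {M : ℕ} {u : ι → (ZMod M)ˣ}
    (hu : ∀ i, (u i : ZMod M) = p i) (h : ∏ i, u i ^ d i = 1) :
    numProd p d ≡ numProd p (-d) [MOD M] := by
  have : ∏ i, u i ^ (d i).toNat = ∏ i, u i ^ (-d i).toNat := by
    rw [← mul_inv_eq_one, ← prod_inv_distrib, ← prod_mul_distrib, ← h]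
    refine prod_congr rfl fun i _ ↦ ?_
    rw [← zpow_natCast, ← zpow_natCast, ← zpow_sub, Int.toNat_sub_toNat_neg]
  rw [← ZMod.natCast_eq_natCast_iff]
  simpa [numProd, hu] using congrArg Units.val this

lemma log_numProd (hp : ∀ i, (p i).Prime) : log (numProd p d) = ∑ i, log (p i) * (d i).toNat := by
  rw [numProd, Nat.cast_prod, Real.log_prod fun i _ ↦ Nat.cast_ne_zero.2 (pow_pos (hp i).pos _).ne']
  simp [mul_comm]

lemma log_numProd_sub (hp : ∀ i, (p i).Prime) :
    log (numProd p d) - log (numProd p (-d)) = ∑ i, log (p i) * d i := by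
  rw [log_numProd hp, log_numProd hp, ← sum_sub_distrib]
  refine sum_congr rfl fun i _ ↦ ?_
  rw [← mul_sub]
  congr 1
  exact_mod_cast Int.toNat_sub_toNat_neg (d i)

lemma log_numProd_add (hp : ∀ i, (p i).Prime) :
    log (numProd p d) + log (numProd p (-d)) = ∑ i, |log (p i) * d i| := by
  rw [log_numProd hp, log_numProd hp, ← sum_add_distrib]
  refine sum_congr rfl fun i _ ↦ ?_
  rw [← mul_add, abs_mul, abs_of_nonneg (Real.log_natCast_nonneg _)]
  congr 1
  rw [← Nat.cast_add, Pi.neg_apply, Int.toNat_add_toNat_neg_eq_natAbs, Nat.cast_natAbs,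
    Int.cast_abs]

lemma exists_isABCTriple_of_prod_zpow_eq_one (hp : ∀ i, (p i).Prime) (hinj : Function.Injective p)
    {M : ℕ} {u : ι → (ZMod M)ˣ} (hu : ∀ i, (u i : ZMod M) = p i) (hd : d ≠ 0)
    (h : ∏ i, u i ^ d i = 1) :
    ∃ a b c, IsABCTriple a b c ∧ M < c ∧
      log c ≤ (∑ i, |log (p i) * d i| + |∑ i, log (p i) * d i|) / 2 ∧
      rad (a * b * c) * M ≤ rad M * (∏ i, p i) * c := by
  obtain ⟨a, b, triple, hM, hrad⟩ := exists_isABCTriple_of_modEq (numProd_pos hp) (numProd_pos hp)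
    (numProd_ne_numProd_neg hp hinj hd) (coprime_numProd_numProd_neg hp hinj)
    (numProd_modEq_numProd_neg hu h)
  refine ⟨a, b, _, triple, hM, ?_, hrad.trans ?_⟩
  · rw [← log_numProd_add hp, ← log_numProd_sub hp]
    rcases max_choice (numProd p d) (numProd p (-d)) with h | h <;> rw [h]
    · linarith [le_abs_self (log (numProd p d) - log (numProd p (-d)))]
    · linarith [neg_abs_le (log (numProd p d) - log (numProd p (-d)))]
  · gcongr
    rw [numProd, numProd, ← prod_mul_distrib]
    simp only [← pow_add]
    exact rad_prod_pow_le (fun i ↦ (hp i).ne_zero) _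

end Triples

section Construction

lemma one_lt_log_four : 1 < log 4 := by
  rw [show (4 : ℝ) = 2 ^ 2 by norm_num, Real.log_pow]
  push_cast
  linarith [Real.log_two_gt_d9]

lemma two_lt_of_one_lt_primeCounting {k : ℕ} (hk : 1 < π k) : 2 < k := by
  by_contra! h
  exact absurd (Nat.monotone_primeCounting h) (not_le.2 (hk.trans_eq' (by decide)))

lemma half_add_le_of_mul_le {S D n μ ε J : ℝ} (hn : 0 ≤ n) (hμ : 1 ≤ μ) (hε : 0 < ε) (hε₁ : ε ≤ 1)
    (hJ : 0 < J) (hJε : 1 ≤ ε * J) (hS : S * J ≤ 2 * (n * (μ + ε) - n) * (J + 1))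
    (hD : D * J ≤ n * (μ + ε)) : (S + D) / 2 ≤ n * ((1 + 3 * ε) * μ - 1) := by
  have S_le : S ≤ 2 * (n * (μ + ε - 1)) * (1 + ε) := by
    refine le_of_mul_le_mul_right (hS.trans ?_) hJ
    have : 0 ≤ n * (μ + ε - 1) := mul_nonneg hn (by linarith)
    nlinarith
  have D_le : D ≤ n * (μ + ε) * ε := by
    refine le_of_mul_le_mul_right (hD.trans ?_) hJ
    have : 0 ≤ n * (μ + ε) := by positivity
    nlinarith
  have : ε * ε ≤ ε * μ := by gcongr; linarith
  nlinarith

lemma exists_isABCTriple_log_le {ε : ℝ} (hε : 0 < ε) (hε₁ : ε ≤ 1) :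
    ∃ η₀ W : ℝ, 0 < η₀ ∧ 0 < W ∧ ∀ η, 0 < η → η ≤ η₀ → ∀ (ι : Type) [Fintype ι] [Nonempty ι]
      (p : ι → ℕ), (∀ i, (p i).Prime) → p.Injective → ∀ L, 0 < L → (∀ i, log (p i) ≤ L) →
      ∃ μ, log 4 ≤ μ ∧ ∀ M : ℕ, 0 < M → (∀ i, (p i).Coprime M) →
        M * W ≤ (exp (μ - ε) / η) ^ Fintype.card ι →
        ∃ a b c, IsABCTriple a b c ∧ M < c ∧
          log c ≤ L / η * (Fintype.card ι * ((1 + 3 * ε) * μ - 1)) ∧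
          rad (a * b * c) * M ≤ rad M * (∏ i, p i) * c := by
  obtain ⟨η₀, K, hη₀, hK, sublevel⟩ := exists_finset_sum_logisticSurprisal_le hε
  set J := ⌈1 / ε⌉₊
  have J_pos : 0 < J := Nat.ceil_pos.2 (by positivity)
  have one_le_mul_J : 1 ≤ ε * J := (div_le_iff₀' hε).1 (Nat.le_ceil _)
  refine ⟨η₀, (2 * J + 1) * (J + 1) * K, hη₀, by positivity,
    fun η hη hηη₀ ι _ _ p hp hinj L hL hpL ↦ ?_⟩
  obtain ⟨μ, hμ, E, hE, large⟩ := sublevel η hη hηη₀ ι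
  have one_lt_μ := one_lt_log_four.trans_le hμ
  refine ⟨μ, hμ, fun M hM hpM hMW ↦ ?_⟩
  have : NeZero M := ⟨hM.ne'⟩
  have card_le : Fintype.card (ZMod M)ˣ * (2 * J + 1) * (J + 1) ≤ #E := by
    have : (M * (2 * J + 1) * (J + 1) : ℝ) ≤ #E := le_of_mul_le_mul_left (by linarith) hK
    refine le_trans ?_ (mod_cast this : M * (2 * J + 1) * (J + 1) ≤ #E)
    rw [ZMod.card_units_eq_totient]
    gcongr
    exact M.totient_le
  obtain ⟨d, hd, hprod, sum_abs, abs_sum⟩ := exists_ne_zero_prod_zpow_eq_one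
    (fun i ↦ ZMod.unitOfCoprime (p i) (hpM i)) (w := fun i ↦ η / L * log (p i))
    (fun i ↦ mul_nonneg (by positivity) (Real.log_natCast_nonneg _))
    (fun i ↦ by rw [div_mul_eq_mul_div, div_le_iff₀ hL]; gcongr; exact hpL i)
    (by positivity) hE J_pos card_le
  obtain ⟨a, b, c, triple, hMc, hc, hrad⟩ := exists_isABCTriple_of_prod_zpow_eq_one hp hinj
    (fun i ↦ ZMod.coe_unitOfCoprime _ (hpM i)) hd hprod
  refine ⟨a, b, c, triple, hMc, hc.trans ?_, hrad⟩
  simp only [mul_assoc (η / L) (log _), abs_mul (η / L), ← mul_sum, abs_of_pos (div_pos hη hL)]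
    at sum_abs abs_sum
  have := half_add_le_of_mul_le (by positivity) one_lt_μ.le hε hε₁ (mod_cast J_pos) one_le_mul_J
    sum_abs abs_sum
  rwa [← mul_add, mul_div_assoc, div_mul_eq_mul_div, div_le_iff₀' hL, ← le_div_iff₀' hη,
    mul_div_right_comm] at this

lemma exists_isABCTriple_log_le_of_primeCounting {ε : ℝ} (hε : 0 < ε) (hε₁ : ε ≤ 1) :
    ∃ C W : ℝ, 0 < W ∧ ∀ k n : ℕ, 0 < n → π k = n + 1 → C ≤ n * log k →
      ∃ μ, log 4 ≤ μ ∧ ∀ m : ℕ, 2 ^ m * W ≤ (exp (μ - ε - 1) * (n * log k)) ^ n →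
        ∃ a b c, IsABCTriple a b c ∧ 2 ^ m < c ∧
          log c ≤ (n * log k) ^ 2 / exp 1 * ((1 + 3 * ε) * μ - 1) ∧
          rad (a * b * c) * 2 ^ m ≤ primorial k * c := by
  obtain ⟨η₀, W, hη₀, hW, triples⟩ := exists_isABCTriple_log_le hε hε₁
  refine ⟨exp 1 / η₀, W, hW, fun k n hn hk hC ↦ ?_⟩
  have two_lt : 2 < k := two_lt_of_one_lt_primeCounting (by omega)
  have two_mem : 2 ∈ k.primesLE := Nat.mem_primesLE.2 ⟨two_lt.le, Nat.prime_two⟩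
  set P := k.primesLE.erase 2
  have card_P : Fintype.card P = n := by
    rw [Fintype.card_coe, card_erase_of_mem two_mem, Nat.primesLE_card_eq_primeCounting, hk,
      Nat.add_sub_cancel]
  have mem_P {p} (hp : p ∈ P) : p ≠ 2 ∧ p ≤ k ∧ p.Prime := by
    simpa [P, Nat.mem_primesLE] using hp
  have : Nonempty P := Fintype.card_pos_iff.1 (card_P ▸ hn)
  have L_pos : 0 < log k := Real.log_pos (by norm_cast; omega)
  obtain ⟨μ, hμ, triples⟩ := triples (exp 1 / (n * log k)) (by positivity)
    (by rwa [div_le_iff₀ (by positivity), ← div_le_iff₀' hη₀]) P (↑) (fun p ↦ (mem_P p.2).2.2)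
    Subtype.val_injective (log k) L_pos fun p ↦ Real.log_le_log
      (mod_cast (mem_P p.2).2.2.pos) (mod_cast (mem_P p.2).2.1)
  refine ⟨μ, hμ, fun m hm ↦ ?_⟩
  obtain ⟨a, b, c, triple, hmc, hc, hrad⟩ := triples (2 ^ m) (by positivity)
    (fun p ↦ .pow_right _ ((Nat.coprime_primes (mem_P p.2).2.2 Nat.prime_two).2 (mem_P p.2).1)) (by
      rw [card_P, Nat.cast_pow, Nat.cast_ofNat]
      refine hm.trans (le_of_eq ?_)
      rw [Real.exp_sub _ 1, div_div_eq_mul_div, div_mul_eq_mul_div])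
  refine ⟨a, b, c, triple, hmc, hc.trans (le_of_eq ?_), hrad.trans ?_⟩
  · rw [card_P]
    field_simp
  · rw [primorial_eq_prod_primesLE, ← mul_prod_erase _ _ two_mem, prod_coe_sort P (fun p ↦ p)]
    gcongr
    exact rad_pow_le two_ne_zero m

lemma mul_sub_log_mul_le {n L : ℝ} (hn : 0 < n) (hL : 0 < L) (ε : ℝ) :
    n * (L - log (n * L) + 1 - ε) ≤ exp (-ε) * exp L / L := by
  have := Real.log_le_sub_one_of_pos (show 0 < exp (-ε) * exp L / (n * L) by positivity)
  rw [Real.log_div (by positivity) (by positivity), Real.log_mul (by positivity) (by positivity),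
    Real.log_exp, Real.log_exp, mul_comm n, ← div_div] at this
  rw [← le_div_iff₀' hn, mul_comm n]
  linarith

lemma mul_primorial_mul_exp_le {k n : ℕ} {ε μ W : ℝ} (hn : 0 < n) (hk : π k = n + 1)
    (hθ : exp (-ε) * k / log k ≤ π k * log k - θ k) (hW : 0 < W)
    (hnW : log (2 * W) + log k ≤ ε * n) :
    2 * W * (primorial k * exp (n * (μ - 3 * ε))) ≤ (exp (μ - ε - 1) * (n * log k)) ^ n := by
  have two_lt : 2 < k := two_lt_of_one_lt_primeCounting (by omega)
  have k_pos : (0 : ℝ) < k := mod_cast two_pos.trans two_lt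
  have L_pos : 0 < log k := Real.log_pos (by norm_cast; omega)
  have primorial_pos : (0 : ℝ) < primorial k := mod_cast primorial_pos k
  have n_pos : (0 : ℝ) < n := mod_cast hn
  have theta_eq : θ k = log (primorial k) := by
    rw [Chebyshev.theta_eq_log_primorial, Nat.floor_natCast]
  rw [← Real.log_le_log_iff (by positivity) (by positivity), Real.log_pow,
    Real.log_mul (x := 2 * W) (by positivity) (by positivity),
    Real.log_mul primorial_pos.ne' (Real.exp_ne_zero _),
    Real.log_mul (Real.exp_ne_zero _) (by positivity), Real.log_exp, Real.log_exp,
    ← theta_eq]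
  have := mul_sub_log_mul_le n_pos L_pos ε
  rw [Real.exp_log k_pos] at this
  rw [hk] at hθ
  push_cast at hθ
  nlinarith

lemma exists_isABCTriple_rad_mul_exp_le {ε : ℝ} (hε : 0 < ε) (hε₁ : ε ≤ 1 / 3) :
    ∃ C : ℝ, ∀ k n : ℕ, 0 < n → π k = n + 1 → C ≤ n * log k → C + log k ≤ ε * n →
      exp (-ε) * k / log k ≤ π k * log k - θ k →
      ∃ μ, log 4 ≤ μ ∧ ∃ a b c, IsABCTriple a b c ∧
        log c ≤ (n * log k) ^ 2 / exp 1 * ((1 + 3 * ε) * μ - 1) ∧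
        n * (μ - 3 * ε) ≤ log c ∧ exp (n * (μ - 3 * ε)) * rad (a * b * c) ≤ c := by
  obtain ⟨C, W, hW, triples⟩ :=
    exists_isABCTriple_log_le_of_primeCounting hε (hε₁.trans (by norm_num))
  refine ⟨max C (log (2 * W)), fun k n hn hk hC hnC hθ ↦ ?_⟩
  obtain ⟨μ, hμ, triples⟩ := triples k n hn hk ((le_max_left _ _).trans hC)
  refine ⟨μ, hμ, ?_⟩
  set G := exp (n * (μ - 3 * ε))
  set X := (exp (μ - ε - 1) * (n * log k)) ^ n
  have le_X : 2 * W * (primorial k * G) ≤ X :=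
    mul_primorial_mul_exp_le hn hk hθ hW (by linarith [le_max_right C (log (2 * W))])
  have one_le_primorial : (1 : ℝ) ≤ primorial k := mod_cast primorial_pos k
  have one_le_G : 1 ≤ G :=
    Real.one_le_exp (mul_nonneg n.cast_nonneg (by linarith [one_lt_log_four]))
  obtain ⟨m, hm, hm'⟩ := exists_nat_pow_near (x := X / W) (y := 2)
    ((one_le_div hW).2 (by nlinarith [one_le_mul_of_one_le_of_one_le one_le_primorial one_le_G]))
    one_lt_two
  have pow_gt : primorial k * G < 2 ^ m := by
    rw [div_lt_iff₀ hW, pow_succ] at hm'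
    nlinarith
  obtain ⟨a, b, c, triple, hmc, hc, hrad⟩ := triples m ((le_div_iff₀ hW).1 hm)
  have G_lt_c : G < c := by
    have : (2 ^ m : ℝ) < c := mod_cast hmc
    nlinarith
  refine ⟨a, b, c, triple, hc, ?_, ?_⟩
  · exact (Real.le_log_iff_exp_le ((Real.exp_pos _).trans G_lt_c)).2 G_lt_c.le
  · have : (rad (a * b * c) * 2 ^ m : ℝ) ≤ primorial k * c := mod_cast hrad
    refine le_of_mul_le_mul_left ?_ (zero_lt_one.trans_le one_le_primorial)
    nlinarith [(rad (a * b * c)).cast_nonneg (α := ℝ)]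

end Construction

section Asymptotics

lemma sqrt_div_log_le {x y : ℝ} (hx : exp 1 ≤ √x) (hxy : √x ≤ y) :
    √x / log x ≤ y / (2 * log y) := by
  have one_lt_exp : 1 < exp 1 := Real.one_lt_exp_iff.2 one_pos
  have log_pos : 0 < log √x := Real.log_pos (one_lt_exp.trans_le hx)
  have antitone := Real.log_div_self_antitoneOn hx (hx.trans hxy) hxy
  have log_x : log x = 2 * log √x := by rw [Real.log_sqrt (Real.sqrt_pos.1 (by linarith)).le]; ring
  have log_y_pos : 0 < log y := log_pos.trans_le (Real.log_le_log (by linarith) hxy)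
  have := inv_anti₀ (div_pos log_y_pos (by linarith)) antitone
  rw [inv_div, inv_div] at this
  rw [log_x, mul_comm 2, mul_comm 2, ← div_div, ← div_div]
  gcongr

lemma sqrt_le_of_le_sq_div_exp_one_mul {x z s : ℝ} (hz : 0 ≤ z) (hs : 0 ≤ s)
    (hx : x ≤ z ^ 2 / exp 1 * (s - 1)) : √x ≤ s * z / (2 * √(exp 1)) := by
  refine Real.sqrt_le_iff.2 ⟨by positivity, hx.trans ?_⟩
  rw [div_pow, mul_pow, mul_pow 2, Real.sq_sqrt (Real.exp_pos 1).le, div_mul_eq_mul_div,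
    div_le_div_iff₀ (by positivity) (by positivity)]
  -- AM-GM: `s - 1 ≤ s ^ 2 / 4`
  have : 0 ≤ z ^ 2 * exp 1 * (s - 2) ^ 2 := by positivity
  linarith

lemma mul_sqrt_div_log_le {ε μ n L x : ℝ} (hε : 0 < ε) (hε₁ : ε ≤ 1 / 7) (hμ : 1 ≤ μ)
    (hn : 16 ≤ n) (hL : 4 ≤ L) (hnL : (1 - ε) * L ≤ log n) (hx : n * (μ - 3 * ε) ≤ x)
    (hx' : x ≤ (n * L) ^ 2 / exp 1 * ((1 + 3 * ε) * μ - 1)) :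
    (1 - 7 * ε) * (4 * √(exp 1)) * (√x / log x) ≤ n * (μ - 3 * ε) := by
  set y := (1 + 3 * ε) * μ * (n * L) / (2 * √(exp 1))
  have sqrt_le : √x ≤ y := sqrt_le_of_le_sq_div_exp_one_mul (by positivity) (by positivity) hx'
  have exp_le_sqrt : exp 1 ≤ √x := by
    refine Real.le_sqrt_of_sq_le ?_
    nlinarith [Real.exp_one_lt_d9, Real.exp_pos 1]
  have n_le_y : n ≤ y := by
    rw [le_div_iff₀ (by positivity)]
    have : √(exp 1) ≤ 2 := Real.sqrt_le_iff.2 ⟨by norm_num, by linarith [Real.exp_one_lt_d9]⟩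
    have : 1 * L ≤ (1 + 3 * ε) * μ * L := by gcongr; nlinarith
    nlinarith
  have log_ge : (1 - ε) * L ≤ log y := hnL.trans (Real.log_le_log (by linarith) n_le_y)
  have one_sub_pos : 0 < 1 - ε := by linarith
  have coeff_nonneg : 0 ≤ (1 - 7 * ε) * (4 * √(exp 1)) := mul_nonneg (by linarith) (by positivity)
  calc (1 - 7 * ε) * (4 * √(exp 1)) * (√x / log x)
      ≤ (1 - 7 * ε) * (4 * √(exp 1)) * (y / (2 * log y)) := by
        exact mul_le_mul_of_nonneg_left (sqrt_div_log_le exp_le_sqrt sqrt_le) coeff_nonneg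
    _ ≤ (1 - 7 * ε) * (4 * √(exp 1)) * (y / (2 * ((1 - ε) * L))) := by
        gcongr
    _ = n * ((1 - 7 * ε) * (1 + 3 * ε) * μ / (1 - ε)) := by
        simp only [y]
        field_simp
        ring
    _ ≤ n * (μ - 3 * ε) := by
        gcongr
        rw [div_le_iff₀ one_sub_pos]
        nlinarith [mul_nonneg hε.le (sub_nonneg.2 hμ), mul_nonneg (sq_nonneg ε) (sub_nonneg.2 hμ)]

lemma eventually_exists_primeCounting_eq_add_one {ε : ℝ} (hε : 0 < ε) (hε₁ : ε < 1) (C : ℝ) :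
    ∀ᶠ k : ℕ in atTop, ∃ n : ℕ, π k = n + 1 ∧ C ≤ n ∧ C ≤ log k ∧ C + log k ≤ ε * n ∧
      (1 - ε) * log k ≤ log n := by
  have rpow_atTop : Tendsto (fun k : ℕ ↦ (k : ℝ) ^ (1 - ε)) atTop atTop :=
    (tendsto_rpow_atTop (sub_pos.2 hε₁)).comp tendsto_natCast_atTop_atTop
  have log_atTop : Tendsto (fun k : ℕ ↦ log k) atTop atTop :=
    Real.tendsto_log_atTop.comp tendsto_natCast_atTop_atTop
  have log_le_rpow : ∀ᶠ k : ℕ in atTop, ‖log k‖ ≤ ε / 2 * ‖(k : ℝ) ^ (1 - ε)‖ :=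
    tendsto_natCast_atTop_atTop.eventually
      ((isLittleO_log_rpow_atTop (sub_pos.2 hε₁)).bound (half_pos hε))
  filter_upwards [eventually_rpow_le_primeCounting_sub_one hε, log_le_rpow,
    rpow_atTop.eventually_ge_atTop C, rpow_atTop.eventually_ge_atTop (2 / ε * C),
    log_atTop.eventually_ge_atTop C, eventually_gt_atTop 0]
    with k hπ hlog hC hC' hCL hk
  have k_pos : (0 : ℝ) < k := mod_cast hk
  have rpow_pos : 0 < (k : ℝ) ^ (1 - ε) := Real.rpow_pos_of_pos k_pos _
  obtain ⟨n, hn⟩ : ∃ n, π k = n + 1 :=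
    Nat.exists_eq_add_one.2 (mod_cast (by linarith : (0 : ℝ) < π k))
  rw [hn, Nat.cast_add_one, add_sub_cancel_right] at hπ
  rw [Real.norm_of_nonneg (Real.log_natCast_nonneg _), Real.norm_of_nonneg rpow_pos.le] at hlog
  rw [div_mul_eq_mul_div, div_le_iff₀ hε] at hC'
  refine ⟨n, hn, hC.trans hπ, hCL, by nlinarith, ?_⟩
  rw [← Real.log_rpow k_pos]
  exact Real.log_le_log rpow_pos hπ

end Asymptotics

lemma exists_pos_le_one_sub_mul {κ K : ℝ} (hK : 0 < K) (hκ : κ < K) :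
    ∃ ε, 0 < ε ∧ ε ≤ 1 / 7 ∧ κ ≤ (1 - 7 * ε) * K := by
  refine ⟨min (1 / 7) ((1 - κ / K) / 7), lt_min (by norm_num) ?_, min_le_left _ _, ?_⟩
  · have := (div_lt_one hK).2 hκ
    linarith
  · rw [← div_le_iff₀ hK]
    linarith [min_le_right (1 / 7) ((1 - κ / K) / 7)]

theorem abc_lower_bound_general {κ : ℝ} (hκ : κ < 4 * √(exp 1)) (N : ℝ) :
    ∃ a b c : ℕ, 0 < a ∧ 0 < b ∧ 0 < c ∧ Nat.gcd a b = 1 ∧ a + b = c ∧ (c : ℝ) > N ∧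
      exp (κ * √(log c) / log (log c)) * (rad (a * b * c) : ℝ) ≤ (c : ℝ) := by
  obtain ⟨ε, hε, hε₁, hκε⟩ := exists_pos_le_one_sub_mul (by positivity) hκ
  obtain ⟨C, triples⟩ := exists_isABCTriple_rad_mul_exp_le hε (hε₁.trans (by norm_num))
  obtain ⟨k, hθ, n, hk, hn, hL, hnL, hlog⟩ :=
    ((frequently_le_primeCounting_mul_log_sub_theta (Real.exp_pos (-ε)).le
      (Real.exp_lt_one_iff.2 (neg_lt_zero.2 hε))).and_eventually
      (eventually_exists_primeCounting_eq_add_one hε (by linarith) (max C (max 16 (2 * N))))).exists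
  replace hnL : C + log k ≤ ε * n := by linarith [le_max_left C (max 16 (2 * N))]
  simp only [max_le_iff] at hn hL
  obtain ⟨-, hn₁₆, hnN⟩ := hn
  obtain ⟨μ, hμ, a, b, c, ⟨ha, hb, hc, hab, hsum⟩, upper, lower, hrad⟩ :=
    triples k n (mod_cast (by linarith : (0 : ℝ) < n)) hk (by nlinarith) hnL hθ
  have one_lt_μ := one_lt_log_four.trans_le hμ
  have half_le : n / 2 ≤ log c := by nlinarith
  refine ⟨a, b, c, ha, hb, hc, hab, hsum, ?_, le_trans ?_ hrad⟩
  · linarith [Real.log_le_sub_one_of_pos (Nat.cast_pos (α := ℝ).2 hc)]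
  gcongr
  calc κ * √(log c) / log (log c) = κ * (√(log c) / log (log c)) := mul_div_assoc ..
    _ ≤ (1 - 7 * ε) * (4 * √(exp 1)) * (√(log c) / log (log c)) := by
        gcongr
        exact div_nonneg (Real.sqrt_nonneg _) (Real.log_nonneg (by linarith))
    _ ≤ n * (μ - 3 * ε) :=
        mul_sqrt_div_log_le hε hε₁ one_lt_μ.le hn₁₆ (by linarith) hlog lower upper

/-- There are infinitely many abc triples `(a, b, c)` (positive integers with
`gcd a b = 1` and `a + b = c`) satisfying
`exp (6.563 * √(log c) / log (log c)) * rad (a * b * c) ≤ c`. -/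
theorem abc_lower_bound (N : ℝ) :
    ∃ a b c : ℕ, 0 < a ∧ 0 < b ∧ 0 < c ∧ Nat.gcd a b = 1 ∧ a + b = c ∧ (c : ℝ) > N ∧
      Real.exp (6.563 * Real.sqrt (Real.log c) / Real.log (Real.log c)) *
        (rad (a * b * c) : ℝ) ≤ (c : ℝ) := by
  have : 6.563 / 4 < √(exp 1) := Real.lt_sqrt_of_sq_lt (by linarith [Real.exp_one_gt_d9])
  exact abc_lower_bound_general (by linarith) N
end

section
/- (Rankin) For every n ≥ 1 and every real x with 1/2 ≤ x < 1, every full-rank lattice L in ℝⁿ contains a nonzero vector v with ‖v‖₁ ≤ ((2−x)/(1−x))^{x−1} · (((1+xn)/x)·Γ(xn+1))^{1/n} · (n^{1−x}/Γ(x+1)) · det(L)^{1/n}. -/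
/-!
For `p = 1/x` and `q = 1/(1 - x)`, put at every lattice point a copy of the mass distribution
`max (0, 1 - (‖z‖_p / R) ^ p)`. If the lattice points are at mutual `ℓ¹` distance at least
`2 * (n / (q + 1)) ^ (1 / q) * R`, then the total mass at any point of space is at most `p`, so the
integral of the distribution is at most `p` times the covolume. Solving for `R` gives the theorem.

The mass bound compares the sum of all pairwise distances of finitely many points with their
`p`-th moment: in each coordinate, sorting `m` numbers turns the sum of their pairwise distances
into `2 * ∑ (2 i + 1 - m) a_i`, which Hölder's inequality estimates once `∑ |2 i + 1 - m| ^ q` is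
known to be at most the integral `m ^ (q + 1) / (q + 1)`.
-/

open Filter MeasureTheory Real Set
open scoped ENNReal

section PowerSums

lemma convexOn_abs_rpow {q : ℝ} (hq : 1 ≤ q) : ConvexOn ℝ univ fun t : ℝ ↦ |t| ^ q := by
  have himage : (abs : ℝ → ℝ) '' univ ⊆ Ici 0 := image_subset_iff.2 fun t _ ↦ abs_nonneg t
  have hconvex : Convex ℝ ((abs : ℝ → ℝ) '' univ) :=
    (isPreconnected_univ.image _ continuous_abs.continuousOn).ordConnected.convex
  exact ((convexOn_rpow hq).subset himage hconvex).comp convexOn_univ_norm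
    ((monotoneOn_rpow_Ici_of_exponent_nonneg (by linarith)).mono himage)

lemma continuous_abs_rpow {q : ℝ} (hq : 0 ≤ q) : Continuous fun t : ℝ ↦ |t| ^ q :=
  continuous_abs.rpow_const fun _ ↦ Or.inr hq

lemma sub_mul_midpoint_le_integral_of_convexOn {f : ℝ → ℝ} {a b : ℝ} (hab : a ≤ b)
    (hf : ConvexOn ℝ (Icc a b) f) (hcont : ContinuousOn f (Icc a b)) :
    (b - a) * f ((a + b) / 2) ≤ ∫ t in a..b, f t := by
  rcases hab.eq_or_lt with rfl | hlt
  · simp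
  have hbarycenter : ⨍ t in a..b, t = (a + b) / 2 := by
    rw [interval_average_eq_div, integral_id]
    field_simp [(sub_pos.2 hlt).ne']
    ring
  have hjensen : f (⨍ t in a..b, t) ≤ ⨍ t in a..b, f t := by
    rw [uIoc_of_le hab]
    exact hf.map_set_average_le hcont isClosed_Icc (by simp [hlt]) (by simp)
      ((ae_restrict_mem measurableSet_Ioc).mono fun _ ht ↦ Ioc_subset_Icc_self ht)
      (continuous_id.integrableOn_Icc.mono_set Ioc_subset_Icc_self)
      (hcont.integrableOn_Icc.mono_set Ioc_subset_Icc_self)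
  rwa [hbarycenter, interval_average_eq_div, le_div_iff₀' (sub_pos.2 hlt)] at hjensen

lemma integral_neg_self_abs_rpow {q a : ℝ} (hq : 0 ≤ q) (ha : 0 ≤ a) :
    ∫ t in (-a)..a, |t| ^ q = 2 * (a ^ (q + 1) / (q + 1)) := by
  have hright : ∫ t in (0)..a, |t| ^ q = a ^ (q + 1) / (q + 1) := by
    have habs : EqOn (fun t : ℝ ↦ |t| ^ q) (· ^ q) (uIcc 0 a) := fun t ht ↦ by
      simp only [abs_of_nonneg (uIcc_of_le ha ▸ ht).1]
    rw [intervalIntegral.integral_congr habs, integral_rpow (Or.inl (by linarith)),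
      zero_rpow (by linarith), sub_zero]
  have hleft : ∫ t in (-a)..0, |t| ^ q = ∫ t in (0)..a, |t| ^ q := by
    simpa using (intervalIntegral.integral_comp_neg (a := 0) (b := a) fun t : ℝ ↦ |t| ^ q).symm
  have hint (c d : ℝ) : IntervalIntegrable (fun t : ℝ ↦ |t| ^ q) volume c d :=
    (continuous_abs_rpow hq).intervalIntegrable c d
  rw [← intervalIntegral.integral_add_adjacent_intervals (hint _ 0) (hint 0 _), hleft, hright,
    two_mul]

lemma sum_abs_two_mul_add_one_sub_rpow_le {q : ℝ} (hq : 1 ≤ q) (m : ℕ) :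
    ∑ i : Fin m, |2 * (i : ℝ) + 1 - m| ^ q ≤ (m : ℝ) ^ (q + 1) / (q + 1) := by
  have hq0 : 0 ≤ q := zero_le_one.trans hq
  let endpoint (i : ℕ) : ℝ := 2 * i - m
  have hcell (i : ℕ) :
      2 * |2 * (i : ℝ) + 1 - m| ^ q ≤ ∫ t in (endpoint i)..(endpoint (i + 1)), |t| ^ q := by
    have hstep : endpoint (i + 1) = endpoint i + 2 := by simp only [endpoint]; push_cast; ring
    have := sub_mul_midpoint_le_integral_of_convexOn (hstep ▸ le_add_of_nonneg_right two_pos.le)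
      ((convexOn_abs_rpow hq).subset (subset_univ _) (convex_Icc (endpoint i) (endpoint (i + 1))))
      (continuous_abs_rpow hq0).continuousOn
    convert this using 3
    · rw [hstep]; ring
    · rw [hstep]; simp only [endpoint]; ring_nf
  have htotal : 2 * ∑ i ∈ Finset.range m, |2 * (i : ℝ) + 1 - m| ^ q ≤
      2 * ((m : ℝ) ^ (q + 1) / (q + 1)) := calc
    _ ≤ ∑ i ∈ Finset.range m, ∫ t in (endpoint i)..(endpoint (i + 1)), |t| ^ q := by
      rw [Finset.mul_sum]
      exact Finset.sum_le_sum fun i _ ↦ hcell i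
    _ = ∫ t in (endpoint 0)..(endpoint m), |t| ^ q :=
      intervalIntegral.sum_integral_adjacent_intervals fun _ _ ↦
        (continuous_abs_rpow hq0).intervalIntegrable _ _
    _ = 2 * ((m : ℝ) ^ (q + 1) / (q + 1)) := by
      rw [← integral_neg_self_abs_rpow hq0 m.cast_nonneg]
      congr 1 <;> simp only [endpoint] <;> push_cast <;> ring
  rw [Fin.sum_univ_eq_sum_range fun i : ℕ ↦ |2 * (i : ℝ) + 1 - m| ^ q]
  linarith

end PowerSums

section PairwiseDistances

lemma sum_sign_sub (m : ℕ) (i : Fin m) :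
    ∑ j : Fin m, ((if j < i then 1 else 0) - (if i < j then 1 else 0) : ℝ) =
      2 * (i : ℝ) + 1 - m := by
  have hbelow : Finset.univ.filter (· < i) = Finset.Iio i := by ext; simp
  have habove : Finset.univ.filter (i < ·) = Finset.Ioi i := by ext; simp
  rw [Finset.sum_sub_distrib, Finset.sum_boole, Finset.sum_boole, hbelow, habove, Fin.card_Iio,
    Fin.card_Ioi, Nat.sub_sub, Nat.cast_sub (by omega)]
  push_cast
  ring

lemma sum_sum_abs_sub_eq_of_monotone {m : ℕ} {a : Fin m → ℝ} (ha : Monotone a) :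
    ∑ i, ∑ j, |a i - a j| = 2 * ∑ i : Fin m, (2 * (i : ℝ) + 1 - m) * a i := by
  let ε (i j : Fin m) : ℝ := (if j < i then 1 else 0) - (if i < j then 1 else 0)
  have habs (i j : Fin m) : |a i - a j| = ε i j * a i + ε j i * a j := by
    rcases lt_trichotomy i j with h | rfl | h
    · rw [abs_of_nonpos (sub_nonpos.2 (ha h.le))]
      simp only [ε, h, h.not_gt, if_true, if_false]
      ring
    · simp [ε]
    · rw [abs_of_nonneg (sub_nonneg.2 (ha h.le))]
      simp only [ε, h, h.not_gt, if_true, if_false]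
      ring
  have hrow : ∑ i, ∑ j, ε i j * a i = ∑ i : Fin m, (2 * (i : ℝ) + 1 - m) * a i := by
    simp only [← Finset.sum_mul, ε, sum_sign_sub]
  simp only [habs, Finset.sum_add_distrib]
  rw [Finset.sum_comm (f := fun i j ↦ ε j i * a j), hrow, two_mul]

variable {κ ι : Type*} [Fintype κ] [Fintype ι]

lemma exists_equiv_sum_sum_abs_sub_eq (a : κ → ℝ) :
    ∃ rank : κ ≃ Fin (Fintype.card κ), ∑ i, ∑ j, |a i - a j| =
      2 * ∑ i, (2 * (rank i : ℝ) + 1 - Fintype.card κ) * a i := by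
  let e := Fintype.equivFin κ
  let rank := e.trans (Tuple.sort (a ∘ e.symm)).symm
  have hmono : Monotone (a ∘ rank.symm) := Tuple.monotone_sort (a ∘ e.symm)
  refine ⟨rank, ?_⟩
  calc ∑ i, ∑ j, |a i - a j|
      = ∑ i, ∑ j, |(a ∘ rank.symm) i - (a ∘ rank.symm) j| := by
        rw [← rank.symm.sum_comp]
        exact Finset.sum_congr rfl fun i _ ↦ (rank.symm.sum_comp _).symm
    _ = 2 * ∑ i, (2 * (rank i : ℝ) + 1 - Fintype.card κ) * a i := by
        rw [sum_sum_abs_sub_eq_of_monotone hmono, ← rank.sum_comp]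
        simp

lemma sum_sum_sum_abs_sub_le {p q : ℝ} (hpq : p.HolderConjugate q) (P : κ → ι → ℝ) :
    ∑ i, ∑ j, ∑ k, |P i k - P j k| ≤
      2 * ((Fintype.card ι * ((Fintype.card κ : ℝ) ^ (q + 1) / (q + 1))) ^ (1 / q) *
        (∑ i, ∑ k, |P i k| ^ p) ^ (1 / p)) := by
  choose rank hrank using fun k ↦ exists_equiv_sum_sum_abs_sub_eq fun i ↦ P i k
  let r (x : κ × ι) : ℝ := 2 * (rank x.2 x.1 : ℝ) + 1 - Fintype.card κ
  have hr : ∑ x, |r x| ^ q ≤ Fintype.card ι * ((Fintype.card κ : ℝ) ^ (q + 1) / (q + 1)) := by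
    rw [Fintype.sum_prod_type_right, ← nsmul_eq_mul]
    refine Finset.sum_le_card_nsmul _ _ _ fun k _ ↦ ?_
    rw [(rank k).sum_comp fun i ↦ |2 * (i : ℝ) + 1 - Fintype.card κ| ^ q]
    exact sum_abs_two_mul_add_one_sub_rpow_le hpq.symm.lt.le _
  calc ∑ i, ∑ j, ∑ k, |P i k - P j k|
      = ∑ k, ∑ i, ∑ j, |P i k - P j k| :=
        (Finset.sum_congr rfl fun i _ ↦ Finset.sum_comm).trans Finset.sum_comm
    _ = 2 * ∑ x, r x * P x.1 x.2 := by
        simp only [hrank, ← Finset.mul_sum, Fintype.sum_prod_type_right, r]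
    _ ≤ 2 * ((∑ x, |r x| ^ q) ^ (1 / q) * (∑ x : κ × ι, |P x.1 x.2| ^ p) ^ (1 / p)) := by
        gcongr
        exact inner_le_Lp_mul_Lq _ _ _ hpq.symm
    _ ≤ _ := by
        have := hpq.symm.pos
        rw [Fintype.sum_prod_type (fun x : κ × ι ↦ |P x.1 x.2| ^ p)]
        gcongr

lemma card_mul_card_sub_one_mul_le_sum_sum {d : κ → κ → ℝ} {M : ℝ} (hdiag : ∀ i, 0 ≤ d i i)
    (hd : Pairwise fun i j ↦ M ≤ d i j) :
    (Fintype.card κ : ℝ) * (Fintype.card κ - 1) * M ≤ ∑ i, ∑ j, d i j := by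
  classical
  have hrow (i : κ) : (Fintype.card κ - 1 : ℝ) * M ≤ ∑ j, d i j := by
    have : Nonempty κ := ⟨i⟩
    calc (Fintype.card κ - 1 : ℝ) * M = (Finset.univ.erase i).card • M := by
          rw [Finset.card_erase_of_mem (Finset.mem_univ i), Finset.card_univ, nsmul_eq_mul,
            Nat.cast_pred Fintype.card_pos]
      _ ≤ ∑ j ∈ Finset.univ.erase i, d i j :=
          Finset.card_nsmul_le_sum _ _ _ fun j hj ↦ hd (Finset.ne_of_mem_erase hj).symm
      _ ≤ ∑ j, d i j := by
          rw [← Finset.add_sum_erase _ _ (Finset.mem_univ i)]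
          exact le_add_of_nonneg_left (hdiag i)
  calc (Fintype.card κ : ℝ) * (Fintype.card κ - 1) * M
      = ∑ _i : κ, (Fintype.card κ - 1 : ℝ) * M := by simp [mul_assoc]
    _ ≤ _ := Finset.sum_le_sum fun i _ ↦ hrow i

lemma rpow_sub_one_mul_sub_le_sub_one_rpow {m p : ℝ} (hm : 1 ≤ m) (hp : 1 ≤ p) :
    m ^ (p - 1) * (m - p) ≤ (m - 1) ^ p := by
  have hm0 : 0 < m := one_pos.trans_le hm
  have hinv : m⁻¹ ≤ 1 := inv_le_one_of_one_le₀ hm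
  calc m ^ (p - 1) * (m - p) = m ^ p * (1 + p * -m⁻¹) := by
        rw [rpow_sub_one hm0.ne']
        field_simp
        ring
    _ ≤ m ^ p * (1 + -m⁻¹) ^ p := by
        gcongr
        exact one_add_mul_self_le_rpow_one_add (neg_le_neg hinv) hp
    _ = (m - 1) ^ p := by
        rw [← mul_rpow hm0.le (by linarith)]
        field_simp
        ring_nf

lemma rpow_mul_card_sub_le_sum_sum_abs_rpow [Nonempty ι] {p q R : ℝ} (hpq : p.HolderConjugate q)
    (hR : 0 ≤ R) {P : κ → ι → ℝ}
    (hP : Pairwise fun i j ↦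
      2 * (Fintype.card ι / (q + 1) : ℝ) ^ (1 / q) * R ≤ ∑ k, |P i k - P j k|) :
    R ^ p * (Fintype.card κ - p) ≤ ∑ i, ∑ k, |P i k| ^ p := by
  have hp := hpq.pos
  have hq := hpq.symm.pos
  rcases isEmpty_or_nonempty κ with _ | _
  · simpa using mul_nonneg (rpow_nonneg hR p) hp.le
  set m := (Fintype.card κ : ℝ)
  set K := (Fintype.card ι / (q + 1) : ℝ) ^ (1 / q)
  set S := ∑ i, ∑ k, |P i k| ^ p
  have hm : 1 ≤ m := Nat.one_le_cast.2 Fintype.card_pos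
  have hK : 0 < K := by positivity
  have hfactor : ((Fintype.card ι : ℝ) * (m ^ (q + 1) / (q + 1))) ^ (1 / q) =
      K * (m * m ^ (1 / q)) := by
    rw [mul_div_left_comm, mul_comm, mul_rpow (by positivity) (by positivity),
      ← rpow_mul (by positivity), ← rpow_one_add' (by positivity) (by positivity)]
    congr 2
    field_simp
  have hlinear : R * (m - 1) ≤ m ^ (1 / q) * S ^ (1 / p) := by
    have hbounds := (card_mul_card_sub_one_mul_le_sum_sum (fun i ↦ by simp) hP).trans
      (sum_sum_sum_abs_sub_le hpq P)
    rw [hfactor] at hbounds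
    refine le_of_mul_le_mul_left ?_ (mul_pos (mul_pos two_pos hK) (one_pos.trans_le hm))
    linarith
  have hpower : R ^ p * (m - 1) ^ p ≤ m ^ (p - 1) * S := by
    have hS : 0 ≤ S := by positivity
    have := rpow_le_rpow (mul_nonneg hR (sub_nonneg.2 hm)) hlinear hp.le
    rwa [mul_rpow hR (sub_nonneg.2 hm), mul_rpow (by positivity) (by positivity),
      ← rpow_mul (by positivity), ← rpow_mul hS, one_div_mul_cancel hp.ne', rpow_one,
      one_div_mul_eq_div, hpq.div_conj_eq_sub_one] at this
  refine le_of_mul_le_mul_left ?_ (show 0 < m ^ (p - 1) by positivity)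
  calc m ^ (p - 1) * (R ^ p * (m - p)) = R ^ p * (m ^ (p - 1) * (m - p)) := by ring
    _ ≤ R ^ p * (m - 1) ^ p := by
        gcongr
        exact rpow_sub_one_mul_sub_le_sub_one_rpow hm hpq.lt.le
    _ ≤ m ^ (p - 1) * S := hpower

end PairwiseDistances

section LayerCake

variable {α : Type*} [MeasurableSpace α] {μ : Measure α}

lemma setLIntegral_ofReal_mul_one_sub_rpow {c s : ℝ} (hc : 0 ≤ c) (hs : -1 < s) :
    ∫⁻ t in Ioo (0 : ℝ) 1, ENNReal.ofReal (c * (1 - t) ^ s) = ENNReal.ofReal (c / (s + 1)) := by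
  have hint : IntervalIntegrable (fun t : ℝ ↦ c * (1 - t) ^ s) volume 0 1 := by
    simpa using (((intervalIntegral.intervalIntegrable_rpow' hs).comp_sub_left 1).symm.const_mul c :
      IntervalIntegrable (fun t : ℝ ↦ c * (1 - t) ^ s) volume (1 - 1) (1 - 0))
  have hnonneg : 0 ≤ᵐ[volume.restrict (Ioo (0 : ℝ) 1)] fun t ↦ c * (1 - t) ^ s :=
    (ae_restrict_mem measurableSet_Ioo).mono fun t ht ↦
      mul_nonneg hc (rpow_nonneg (sub_nonneg.2 ht.2.le) s)
  rw [← ofReal_integral_eq_lintegral_ofReal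
    ((intervalIntegrable_iff_integrableOn_Ioo_of_le zero_le_one).1 hint) hnonneg,
    ← integral_Ioc_eq_integral_Ioo, ← intervalIntegral.integral_of_le zero_le_one,
    intervalIntegral.integral_const_mul,
    intervalIntegral.integral_comp_sub_left (fun t : ℝ ↦ t ^ s), integral_rpow (Or.inl hs)]
  simp [zero_rpow (by linarith : s + 1 ≠ 0), div_eq_mul_inv]

lemma lintegral_ofReal_one_sub_of_measure_lt {g : α → ℝ} (hg : Measurable g) (hg0 : 0 ≤ g)
    {c s : ℝ} (hc : 0 ≤ c) (hs : -1 < s)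
    (hμ : ∀ r ∈ Ioo (0 : ℝ) 1, μ {a | g a < r} = ENNReal.ofReal (c * r ^ s)) :
    ∫⁻ a, ENNReal.ofReal (1 - g a) ∂μ = ENNReal.ofReal (c / (s + 1)) := by
  have hlevel : ∀ t ∈ Ioi (0 : ℝ), μ {a | t < max 0 (1 - g a)} =
      (Ioo (0 : ℝ) 1).indicator (fun t ↦ ENNReal.ofReal (c * (1 - t) ^ s)) t := by
    intro t (ht : 0 < t)
    have hset : {a | t < max 0 (1 - g a)} = {a | g a < 1 - t} := by
      ext a
      simp [ht.not_gt, lt_sub_comm]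
    rw [hset]
    by_cases ht1 : t < 1
    · rw [indicator_of_mem (mem_Ioo.2 ⟨ht, ht1⟩), hμ _ ⟨sub_pos.2 ht1, sub_lt_self 1 ht⟩]
    · have hempty : {a | g a < 1 - t} = ∅ :=
        eq_empty_of_forall_notMem fun a ha ↦ by
          linarith [hg0 a, show g a < 1 - t from ha, show (0 : α → ℝ) a = 0 from rfl]
      rw [indicator_of_notMem fun h ↦ ht1 h.2, hempty, measure_empty]
  calc ∫⁻ a, ENNReal.ofReal (1 - g a) ∂μ
      = ∫⁻ a, ENNReal.ofReal (max 0 (1 - g a)) ∂μ := by simp [ENNReal.ofReal_max]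
    _ = ∫⁻ t in Ioi 0, μ {a | t < max 0 (1 - g a)} :=
        lintegral_eq_lintegral_meas_lt _ (ae_of_all _ fun _ ↦ le_max_left _ _)
          (by fun_prop)
    _ = ∫⁻ t in Ioo (0 : ℝ) 1, ENNReal.ofReal (c * (1 - t) ^ s) := by
        rw [setLIntegral_congr_fun measurableSet_Ioi hlevel,
          setLIntegral_indicator measurableSet_Ioo, inter_eq_left.2 Ioo_subset_Ioi_self]
    _ = ENNReal.ofReal (c / (s + 1)) := setLIntegral_ofReal_mul_one_sub_rpow hc hs

end LayerCake

section Density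

variable {ι : Type*} [Fintype ι]

/-- Rankin's mass distribution `max (0, 1 - (‖z‖_p / R) ^ p)`, supported on the `ℓᵖ` ball of radius
`R`. The maximum with `0` is the truncation performed by `ENNReal.ofReal`. -/
noncomputable def rankinDensity (p R : ℝ) (z : ι → ℝ) : ℝ≥0∞ :=
  ENNReal.ofReal (1 - (∑ k, |z k| ^ p) / R ^ p)

lemma measurable_rankinDensity (p R : ℝ) :
    Measurable (rankinDensity p R : (ι → ℝ) → ℝ≥0∞) := by
  unfold rankinDensity
  fun_prop

lemma sum_rankinDensity_le [Nonempty ι] {κ : Type*} {p q R : ℝ} (hpq : p.HolderConjugate q)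
    (hR : 0 < R) {P : κ → ι → ℝ} (s : Finset κ)
    (hP : (s : Set κ).Pairwise fun i j ↦
      2 * (Fintype.card ι / (q + 1) : ℝ) ^ (1 / q) * R ≤ ∑ k, |P i k - P j k|) :
    ∑ i ∈ s, rankinDensity p R (P i) ≤ ENNReal.ofReal p := by
  classical
  let mass (i : κ) : ℝ := 1 - (∑ k, |P i k| ^ p) / R ^ p
  let t := s.filter fun i ↦ 0 < mass i
  have hmoment : R ^ p * (t.card - p) ≤ ∑ i ∈ t, ∑ k, |P i k| ^ p := by
    have hsep : Pairwise fun i j : t ↦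
        2 * (Fintype.card ι / (q + 1) : ℝ) ^ (1 / q) * R ≤ ∑ k, |P i k - P j k| :=
      fun i j hij ↦ hP (Finset.mem_of_mem_filter _ i.2) (Finset.mem_of_mem_filter _ j.2)
        (Subtype.coe_ne_coe.2 hij)
    simpa [← Finset.sum_coe_sort t] using rpow_mul_card_sub_le_sum_sum_abs_rpow hpq hR.le hsep
  have hmass : ∑ i ∈ t, mass i ≤ p := by
    simp only [mass, Finset.sum_sub_distrib, ← Finset.sum_div, Finset.sum_const, nsmul_one]
    rw [sub_le_comm, le_div_iff₀' (rpow_pos_of_pos hR p)]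
    exact hmoment
  calc ∑ i ∈ s, rankinDensity p R (P i) = ∑ i ∈ t, ENNReal.ofReal (mass i) :=
        (Finset.sum_filter_of_ne fun _ _ h ↦ ENNReal.ofReal_pos.1 (pos_iff_ne_zero.2 h)).symm
    _ = ENNReal.ofReal (∑ i ∈ t, mass i) :=
        (ENNReal.ofReal_sum_of_nonneg fun _ hi ↦ (Finset.mem_filter.1 hi).2.le).symm
    _ ≤ ENNReal.ofReal p := ENNReal.ofReal_le_ofReal hmass

lemma volume_sum_abs_rpow_div_lt [Nonempty ι] {p R r : ℝ} (hp : 1 ≤ p) (hR : 0 < R) (hr : 0 ≤ r) :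
    volume {z : ι → ℝ | (∑ k, |z k| ^ p) / R ^ p < r} =
      ENNReal.ofReal (R ^ Fintype.card ι * ((2 * Gamma (1 / p + 1)) ^ Fintype.card ι /
        Gamma (Fintype.card ι / p + 1)) * r ^ (Fintype.card ι / p)) := by
  have hp0 : 0 < p := one_pos.trans_le hp
  have hball : {z : ι → ℝ | (∑ k, |z k| ^ p) / R ^ p < r} =
      {z | (∑ k, |z k| ^ p) ^ (1 / p) < R * r ^ (1 / p)} := by
    ext z
    have hsum : 0 ≤ ∑ k, |z k| ^ p := by positivity
    have hscale : R * r ^ (1 / p) = (R ^ p * r) ^ (1 / p) := by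
      rw [mul_rpow (by positivity) hr, one_div, rpow_rpow_inv hR.le hp0.ne']
    simp only [mem_ofPred_eq]
    rw [hscale, rpow_lt_rpow_iff hsum (by positivity) (by positivity),
      div_lt_iff₀' (by positivity)]
  rw [hball, volume_sum_rpow_lt ι hp, ← ENNReal.ofReal_pow (by positivity),
    ← ENNReal.ofReal_mul (by positivity), mul_pow, ← rpow_mul_natCast hr, one_div_mul_eq_div]
  ring_nf

lemma lintegral_rankinDensity [Nonempty ι] {p R : ℝ} (hp : 1 ≤ p) (hR : 0 < R) :
    ∫⁻ z : ι → ℝ, rankinDensity p R z =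
      ENNReal.ofReal (R ^ Fintype.card ι * ((2 * Gamma (1 / p + 1)) ^ Fintype.card ι /
        Gamma (Fintype.card ι / p + 1)) / (Fintype.card ι / p + 1)) := by
  have hp0 : 0 < p := one_pos.trans_le hp
  have hexp : (0 : ℝ) ≤ Fintype.card ι / p := div_nonneg (Nat.cast_nonneg _) hp0.le
  exact lintegral_ofReal_one_sub_of_measure_lt (by fun_prop) (fun z ↦ by positivity)
    (by positivity) (by linarith) fun r hr ↦ volume_sum_abs_rpow_div_lt hp hR hr.1.le

end Density

section Averaging

variable {G α : Type*} [AddGroup G] [AddAction G α] [Countable G] [MeasurableSpace α]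
  {μ : Measure α} [MeasurableConstVAdd G α] [VAddInvariantMeasure G α μ]

lemma lintegral_le_mul_of_tsum_vadd_le {F : Set α} (hF : IsAddFundamentalDomain G F μ)
    {f : α → ℝ≥0∞} (hf : Measurable f) {C : ℝ≥0∞} (hC : ∀ a, ∑' g : G, f (g +ᵥ a) ≤ C) :
    ∫⁻ a, f a ∂μ ≤ C * μ F := calc
  ∫⁻ a, f a ∂μ = ∑' g : G, ∫⁻ a in F, f (g +ᵥ a) ∂μ := hF.lintegral_eq_tsum'' f
  _ = ∫⁻ a in F, ∑' g : G, f (g +ᵥ a) ∂μ :=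
    (lintegral_tsum fun g ↦ (hf.comp (measurable_const_vadd g)).aemeasurable).symm
  _ ≤ ∫⁻ _ in F, C ∂μ := lintegral_mono hC
  _ = C * μ F := setLIntegral_const F C

end Averaging

section Lattice

variable {ι : Type*} [Fintype ι]

lemma tsum_rankinDensity_vadd_le [Nonempty ι] {p q M : ℝ} (hpq : p.HolderConjugate q)
    (hM : 0 < M) {L : Submodule ℤ (ι → ℝ)} (hL : ∀ v ∈ L, v ≠ 0 → M ≤ ∑ k, |v k|) (z : ι → ℝ) :
    ∑' g : L, rankinDensity p (M / (2 * (Fintype.card ι / (q + 1) : ℝ) ^ (1 / q))) (g +ᵥ z) ≤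
      ENNReal.ofReal p := by
  have hq := hpq.symm.pos
  rw [ENNReal.tsum_eq_iSup_sum]
  refine iSup_le fun s ↦ sum_rankinDensity_le hpq (by positivity) s fun g _ h _ hgh ↦ ?_
  rw [mul_div_cancel₀ _ (by positivity)]
  simpa [Submodule.vadd_def] using
    hL (g - h : L) (g - h).2 (by simpa [sub_eq_zero] using hgh)

lemma lintegral_le_mul_covolume {E : Type*} [NormedAddCommGroup E] [NormedSpace ℝ E]
    [FiniteDimensional ℝ E] [MeasurableSpace E] [BorelSpace E] {μ : Measure E}
    [μ.IsAddHaarMeasure] (L : Submodule ℤ E) [DiscreteTopology L] [IsZLattice ℝ L]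
    {f : E → ℝ≥0∞} (hf : Measurable f) {C : ℝ≥0∞} (hC : ∀ z, ∑' g : L, f (g +ᵥ z) ≤ C) :
    ∫⁻ z, f z ∂μ ≤ C * ENNReal.ofReal (ZLattice.covolume L μ) := by
  let b := Module.Free.chooseBasis ℤ L
  have : MeasurableVAdd L E := inferInstanceAs (MeasurableVAdd L.toAddSubgroup E)
  have : VAddInvariantMeasure L E μ := inferInstanceAs (VAddInvariantMeasure L.toAddSubgroup E μ)
  have hdomain := ZLattice.isAddFundamentalDomain b μ
  rw [ZLattice.covolume_eq_measure_fundamentalDomain L μ hdomain, ofReal_measureReal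
    (ZSpan.fundamentalDomain_isBounded _).measure_lt_top.ne]
  exact lintegral_le_mul_of_tsum_vadd_le hdomain hf hC

lemma pow_card_le_mul_covolume_of_forall_le_sum_abs [Nonempty ι] {p q M : ℝ}
    (hpq : p.HolderConjugate q) (hM : 0 < M) {L : Submodule ℤ (ι → ℝ)} [DiscreteTopology L]
    [IsZLattice ℝ L] (hL : ∀ v ∈ L, v ≠ 0 → M ≤ ∑ k, |v k|) :
    (M * Gamma (1 / p + 1) / (Fintype.card ι / (q + 1) : ℝ) ^ (1 / q)) ^ Fintype.card ι ≤
      (Fintype.card ι + p) * Gamma (Fintype.card ι / p + 1) * ZLattice.covolume L := by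
  have hp := hpq.pos
  have hq := hpq.symm.pos
  set K := (Fintype.card ι / (q + 1) : ℝ) ^ (1 / q)
  have hK : 0 < K := by positivity
  have hmass := lintegral_le_mul_covolume (μ := volume) L
    (measurable_rankinDensity p (M / (2 * K))) (tsum_rankinDensity_vadd_le hpq hM hL)
  rw [lintegral_rankinDensity hpq.lt.le (by positivity), ← ENNReal.ofReal_mul hp.le,
    ENNReal.ofReal_le_ofReal_iff (mul_nonneg hp.le (ZLattice.covolume_pos L volume).le),
    ← mul_div_assoc, ← mul_pow, div_div, div_le_iff₀ (by positivity)] at hmass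
  calc _ = (M / (2 * K) * (2 * Gamma (1 / p + 1))) ^ Fintype.card ι := by
        congr 1
        field_simp
    _ ≤ _ := hmass
    _ = _ := by field_simp

lemma exists_ne_zero_forall_le_of_tendsto_cocompact {E : Type*} [AddCommGroup E]
    [TopologicalSpace E] [IsTopologicalAddGroup E] [T2Space E] (L : AddSubgroup E)
    [DiscreteTopology L] [Nontrivial L] {N : E → ℝ} (hN : Tendsto N (cocompact E) atTop) :
    ∃ v ∈ L, v ≠ 0 ∧ ∀ w ∈ L, w ≠ 0 → N v ≤ N w := by
  have htendsto : Tendsto (fun v : L ↦ N v) cofinite atTop :=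
    hN.comp (L.tendsto_coe_cofinite_of_discrete (SetLike.isDiscrete_iff_discreteTopology.2 ‹_›))
  obtain ⟨v, hv, hmin⟩ := htendsto.exists_within_forall_le (s := {0}ᶜ) (exists_ne (0 : L))
  exact ⟨v, v.2, by simpa using hv, fun w hw hw0 ↦ hmin ⟨w, hw⟩ (by simpa using hw0)⟩

lemma norm_le_sum_abs (v : ι → ℝ) : ‖v‖ ≤ ∑ k, |v k| :=
  (pi_norm_le_iff_of_nonneg (by positivity)).2 fun k ↦
    Finset.single_le_sum (f := fun k ↦ |v k|) (fun _ _ ↦ abs_nonneg _) (Finset.mem_univ k)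

lemma tendsto_sum_abs_cocompact_atTop :
    Tendsto (fun v : ι → ℝ ↦ ∑ k, |v k|) (cocompact (ι → ℝ)) atTop :=
  tendsto_atTop_mono norm_le_sum_abs tendsto_norm_cocompact_atTop

lemma nontrivial_of_isZLattice {E : Type*} [NormedAddCommGroup E] [NormedSpace ℝ E]
    [FiniteDimensional ℝ E] [Nontrivial E] (L : Submodule ℤ E) [DiscreteTopology L]
    [IsZLattice ℝ L] : Nontrivial L :=
  Module.nontrivial_of_finrank_pos (R := ℤ) <| by
    rw [ZLattice.rank ℝ L]
    exact Module.finrank_pos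

lemma le_mul_covolume_rpow_of_forall_le_sum_abs [Nonempty ι] {x M : ℝ} (hx : 0 < x) (hx1 : x < 1)
    (hM : 0 < M) {L : Submodule ℤ (ι → ℝ)} [DiscreteTopology L] [IsZLattice ℝ L]
    (hL : ∀ v ∈ L, v ≠ 0 → M ≤ ∑ k, |v k|) :
    M ≤ ((2 - x) / (1 - x)) ^ (x - 1) *
      (((1 + x * Fintype.card ι) / x) * Gamma (x * Fintype.card ι + 1)) ^
        ((1 : ℝ) / Fintype.card ι) *
      ((Fintype.card ι : ℝ) ^ (1 - x) / Gamma (x + 1)) *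
      ZLattice.covolume L ^ ((1 : ℝ) / Fintype.card ι) := by
  have hx' : 0 < 1 - x := sub_pos.2 hx1
  have hx2 : 0 < 2 - x := by linarith
  have hcov := ZLattice.covolume_pos L volume
  have hGamma : 0 < Gamma (x + 1) := Gamma_pos_of_pos (by positivity)
  have hK : ((Fintype.card ι : ℝ) / ((1 - x)⁻¹ + 1)) ^ (1 - x) =
      ((2 - x) / (1 - x)) ^ (x - 1) * (Fintype.card ι : ℝ) ^ (1 - x) := by
    rw [← neg_sub 1 x, rpow_neg (by positivity), ← inv_rpow (by positivity),
      ← mul_rpow (by positivity) (by positivity)]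
    congr 1
    field_simp
    ring
  have hbound := pow_card_le_mul_covolume_of_forall_le_sum_abs (.inv_one_sub_inv hx hx1) hM hL
  simp only [div_inv_eq_mul, one_mul, hK] at hbound
  have hroot := rpow_le_rpow (by positivity) hbound (inv_nonneg.2 (Fintype.card ι).cast_nonneg)
  rw [pow_rpow_inv_natCast (by positivity) Fintype.card_ne_zero,
    mul_rpow (by positivity) hcov.le, div_le_iff₀ (by positivity), ← le_div_iff₀ hGamma] at hroot
  refine hroot.trans_eq ?_
  rw [one_div, show (1 + x * Fintype.card ι) / x = Fintype.card ι + x⁻¹ by field_simp; ring,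
    mul_comm x]
  ring

theorem rankin_l1_bound_general [Nonempty ι] {x : ℝ} (hx : 0 < x) (hx1 : x < 1)
    (L : Submodule ℤ (ι → ℝ)) [DiscreteTopology L] [IsZLattice ℝ L] :
    ∃ v ∈ L, v ≠ 0 ∧ ∑ i, |v i| ≤ ((2 - x) / (1 - x)) ^ (x - 1) *
      (((1 + x * Fintype.card ι) / x) * Gamma (x * Fintype.card ι + 1)) ^
        ((1 : ℝ) / Fintype.card ι) *
      ((Fintype.card ι : ℝ) ^ (1 - x) / Gamma (x + 1)) *
      ZLattice.covolume L ^ ((1 : ℝ) / Fintype.card ι) := by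
  have : Nontrivial L.toAddSubgroup := nontrivial_of_isZLattice L
  obtain ⟨v, hvL, hv0, hmin⟩ := exists_ne_zero_forall_le_of_tendsto_cocompact L.toAddSubgroup
    tendsto_sum_abs_cocompact_atTop
  exact ⟨v, hvL, hv0, le_mul_covolume_rpow_of_forall_le_sum_abs hx hx1
    ((norm_pos_iff.2 hv0).trans_le (norm_le_sum_abs v)) hmin⟩

lemma covolume_span_range_eq_abs_det [DecidableEq ι] (B : Module.Basis ι ℝ (ι → ℝ)) :
    ZLattice.covolume (Submodule.span ℤ (range B)) = |(Matrix.of B).det| := by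
  rw [ZLattice.covolume_eq_measure_fundamentalDomain _ volume
    (ZSpan.isAddFundamentalDomain B volume), ZSpan.volume_real_fundamentalDomain]

lemma exists_basis_coe_eq_of_det_ne_zero [DecidableEq ι] [Nonempty ι] {K : Type*} [Field K]
    {b : ι → ι → K} (hb : (Matrix.of b).det ≠ 0) : ∃ B : Module.Basis ι K (ι → K), ⇑B = b :=
  ⟨basisOfLinearIndependentOfCardEqFinrank (Matrix.linearIndependent_rows_of_det_ne_zero hb)
    (by simp), coe_basisOfLinearIndependentOfCardEqFinrank _ _⟩

end Lattice

/-- Rankin's theorem: for `n ≥ 1` and `1/2 ≤ x < 1`, every full-rank lattice in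
`ℝⁿ` (the ℤ-span of an ℝ-basis, given by the rows `b` of a matrix with nonzero
determinant, whose covolume is `|det b|`) contains a nonzero vector `v` with
`‖v‖₁ ≤ ((2-x)/(1-x))^(x-1) · (((1+xn)/x)·Γ(xn+1))^(1/n) · (n^(1-x)/Γ(x+1)) · det(L)^(1/n)`. -/
theorem rankin_l1_bound (n : ℕ) (hn : 1 ≤ n) (x : ℝ) (hx : 1 / 2 ≤ x) (hx1 : x < 1)
    (b : Fin n → Fin n → ℝ) (hb : (Matrix.of b).det ≠ 0) :
    ∃ v ∈ Submodule.span ℤ (Set.range b), v ≠ 0 ∧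
      ∑ i, |v i| ≤ ((2 - x) / (1 - x)) ^ (x - 1) *
        (((1 + x * n) / x) * Real.Gamma (x * n + 1)) ^ ((1 : ℝ) / n) *
        ((n : ℝ) ^ (1 - x) / Real.Gamma (x + 1)) *
        |(Matrix.of b).det| ^ ((1 : ℝ) / n) := by
  have : Nonempty (Fin n) := Fin.pos_iff_nonempty.1 hn
  obtain ⟨B, rfl⟩ := exists_basis_coe_eq_of_det_ne_zero hb
  simpa only [Fintype.card_fin, covolume_span_range_eq_abs_det] using
    rankin_l1_bound_general (by linarith) hx1 (Submodule.span ℤ (range B))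
end
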